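/- Let V be a finite-dimensional irreducible □_q-module of type 1. Then V is isomorphic to ^{ρ²}V as a □_q-module; that is, there exists an F-linear bijection σ: V → V such that σ(x_i·v) = x_{i+2}·σ(v) for all i ∈ ℤ/4ℤ and all v ∈ V. -/

import Mathlib

noncomputable section

open FreeAlgebra

variable (F : Type) [Field F]

/-- The defining relations of the algebra `□_q` (Terwilliger), on the free algebra
with generators `x_i`, `i ∈ ℤ/4ℤ`. -/
inductive BoxRel (q : F) : FreeAlgebra F (ZMod 4) → FreeAlgebra F (ZMod 4) → Prop
  | rel1 (i : ZMod 4) : BoxRel q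
      (q • (ι F i * ι F (i + 1)) - q⁻¹ • (ι F (i + 1) * ι F i))
      ((q - q⁻¹) • (1 : FreeAlgebra F (ZMod 4)))
  | rel2 (i : ZMod 4) : BoxRel q
      (ι F i ^ 3 * ι F (i + 2) +
        ((q ^ 3 - (q⁻¹) ^ 3) / (q - q⁻¹)) • (ι F i * ι F (i + 2) * ι F i ^ 2))
      (((q ^ 3 - (q⁻¹) ^ 3) / (q - q⁻¹)) • (ι F i ^ 2 * ι F (i + 2) * ι F i) +
        ι F (i + 2) * ι F i ^ 3)

/-- The algebra `□_q`, presented by generators and relations. -/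
abbrev BoxQ (q : F) : Type := RingQuot (BoxRel F q)

/-- The generators `x_i` of `□_q`. -/
def bx (q : F) (i : ZMod 4) : BoxQ F q :=
  RingQuot.mkAlgHom F (BoxRel F q) (ι F i)

/-- `f` acts semisimply: `V` is spanned by the eigenspaces of `f`. -/
def SemisimpleOn {V : Type} [AddCommGroup V] [Module F V] (f : Module.End F V) : Prop :=
  (⨆ θ : F, Module.End.eigenspace f θ) = ⊤

/-- The set of (distinct) eigenvalues of `f`. -/
def EigSet {V : Type} [AddCommGroup V] [Module F V] (f : Module.End F V) : Set F :=
  {θ : F | Module.End.eigenspace f θ ≠ ⊥}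

/-- The representation `π` of `A` on `V` is irreducible. -/
def IsIrrep {A V : Type} [Ring A] [Algebra F A] [AddCommGroup V] [Module F V]
    (π : A →ₐ[F] Module.End F V) : Prop :=
  Nontrivial V ∧ ∀ W : Submodule F V, (∀ a : A, ∀ v ∈ W, π a v ∈ W) → W = ⊥ ∨ W = ⊤

/-- Isomorphism of representations of `A`. -/
def RepIso {A V W : Type} [Ring A] [Algebra F A] [AddCommGroup V] [Module F V]
    [AddCommGroup W] [Module F W]
    (π : A →ₐ[F] Module.End F V) (π' : A →ₐ[F] Module.End F W) : Prop :=
  ∃ σ : V ≃ₗ[F] W, ∀ (a : A) (v : V), σ (π a v) = π' a (σ v)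

/-- The `□_q`-module given by `π` has type `1` and diameter `d`: each generator `x_i`
acts semisimply with set of distinct eigenvalues `{q^(d-2n) : 0 ≤ n ≤ d}`. -/
def Type1Diam (q : F) {V : Type} [AddCommGroup V] [Module F V]
    (π : BoxQ F q →ₐ[F] Module.End F V) (d : ℕ) : Prop :=
  ∀ i : ZMod 4, SemisimpleOn F (π (bx F q i)) ∧
    EigSet F (π (bx F q i)) =
      {θ : F | ∃ n : ℕ, n ≤ d ∧ θ = q ^ ((d : ℤ) - 2 * (n : ℤ))}


/-!
Attach to each vertex `i` of the square the flag formed by the eigenspaces of `x_i` in the standard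
order; the Weyl relations say that the eigenspaces of `x_{i-1}` in reversed order give the same
flag. The flags at `0` and `2` are opposite: the sum of their intersections in a fixed total degree
is a submodule, hence zero or everything. They therefore give a split decomposition `U`, in which
`x_0` and `x_2` are, up to diagonal terms, a lowering operator `R` and a raising operator `L`. The
leading terms of the cubic relations between `x_0` and `x_2` are the `q`-Serre relations between
`R` and `L`.

Let `d` be the diameter. Generate a subspace `N` of `V × V` from the graph of `L ^ d` on `U 0`
under the operators `(R, L)` and `(L, R)`. It is invariant under `(x_0, x_2)` and `(x_2, x_0)`, and
a comparison of dimensions shows that a subspace invariant under two opposite generators is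
invariant under the other two. So `N` is a submodule of `V ⊕ ^{ρ²}V`, and it is the graph of an
isomorphism as soon as it contains neither summand. This holds because `N` meets `U 0 × U d` only
in the initial graph, which is the identity `L ^ a R ^ a L ^ d = L ^ d R ^ a L ^ a` on `U 0`
together with the fact that, by the Serre relations, all degree-preserving words in `R` and `L`
stabilize every subspace of `U 0` that is stable under each `R ^ a L ^ a`.
-/

/-! ### The cubic `q`-Serre relation -/

section Serre

open Polynomial Finset

variable {K A : Type*} [Field K] [Ring A] [Algebra K A] {q : K} {X Y Z : A}

/-- The left-hand side of the cubic `q`-Serre relation `[X, [X, [X, Y]_{q⁻²}]]_{q²} = 0`, in which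
`[3]_q` is written as `q² + 1 + q⁻²`. -/
def qSerre (q : K) (X Y : A) : A :=
  X ^ 3 * Y - (q ^ 2 + 1 + q⁻¹ ^ 2) • (X ^ 2 * Y * X) +
    (q ^ 2 + 1 + q⁻¹ ^ 2) • (X * Y * X ^ 2) - Y * X ^ 3

lemma qSerre_sub (X Y Z : A) : qSerre q X (Y - Z) = qSerre q X Y - qSerre q X Z := by
  simp only [qSerre, mul_sub, sub_mul, smul_sub]
  abel

lemma qSerre_inv (X Y : A) : qSerre q⁻¹ X Y = qSerre q X Y := by
  have hcoeff : q⁻¹ ^ 2 + 1 + q ^ 2 = q ^ 2 + 1 + q⁻¹ ^ 2 := by ring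
  rw [qSerre, inv_inv, hcoeff, qSerre]

lemma qSerre_prodMap {M M' : Type*} [AddCommGroup M] [Module K M] [AddCommGroup M'] [Module K M']
    (x y : Module.End K M) (x' y' : Module.End K M') :
    qSerre q (x.prodMap x' : Module.End K (M × M')) (y.prodMap y') =
      (qSerre q x y).prodMap (qSerre q x' y') := by
  ext <;> simp [qSerre, pow_succ]

/-- The kernel of `∏_{j < n} (l - q ^ (2 * (s + j)) • r)`, where `l` and `r` are left and right
multiplication by `X`. -/
def skewKer (q : K) (X : A) : ℕ → ℤ → Submodule K A
  | 0, _ => ⊥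
  | n + 1, s => (skewKer q X n (s + 1)).comap
      (LinearMap.mulLeft K X - q ^ (2 * s) • LinearMap.mulRight K X)

lemma mem_skewKer_zero {s : ℤ} : Z ∈ skewKer q X 0 s ↔ Z = 0 := Iff.rfl

lemma mem_skewKer_succ {n : ℕ} {s : ℤ} :
    Z ∈ skewKer q X (n + 1) s ↔ X * Z - q ^ (2 * s) • (Z * X) ∈ skewKer q X n (s + 1) := Iff.rfl

lemma qSerre_eq_zero_iff_mem_skewKer (hq : q ≠ 0) :
    qSerre q X Y = 0 ↔ Y ∈ skewKer q X 3 (-1) := by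
  have e₁ : q ^ (2 * (-1 : ℤ)) = q⁻¹ ^ 2 := by
    rw [zpow_mul, zpow_neg_one]; norm_cast; rw [inv_pow]
  have e₂ : q ^ (2 * (-1 + 1 : ℤ)) = 1 := by norm_num
  have e₃ : q ^ (2 * (-1 + 1 + 1 : ℤ)) = q ^ 2 := by norm_num
  have e₄ : q⁻¹ ^ 2 * q ^ 2 = 1 := by field_simp
  rw [mem_skewKer_succ, mem_skewKer_succ, mem_skewKer_succ, mem_skewKer_zero, e₁, e₂, e₃, qSerre]
  generalize q⁻¹ ^ 2 = a at *
  generalize q ^ 2 = b at *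
  refine Eq.congr_left ?_
  simp only [one_smul, mul_sub, sub_mul, mul_smul_comm, smul_mul_assoc, smul_sub, smul_smul,
    add_smul, mul_comm b a, e₄, pow_succ, pow_zero, one_mul, mul_assoc]
  abel

lemma qSerre_eq_zero_of_weyl (hq : q ≠ 0) {c : K}
    (h : q • (X * Y) - q⁻¹ • (Y * X) = c • 1) : qSerre q X Y = 0 := by
  rw [qSerre_eq_zero_iff_mem_skewKer hq, mem_skewKer_succ]
  have hscalar : X * Y - q ^ (2 * (-1 : ℤ)) • (Y * X) = (q⁻¹ * c) • 1 := by
    rw [mul_smul, ← h, smul_sub, smul_smul, smul_smul, inv_mul_cancel₀ hq, one_smul,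
      show 2 * (-1 : ℤ) = -1 + -1 by norm_num, zpow_add₀ hq, zpow_neg_one]
  rw [hscalar, mem_skewKer_succ]
  simp

lemma mul_mem_skewKer (hq : q ≠ 0) {n k : ℕ} {s t : ℤ} {Z Z' : A}
    (h : Z ∈ skewKer q X (n + 1) s) (h' : Z' ∈ skewKer q X (k + 1) t) :
    Z * Z' ∈ skewKer q X (n + k + 1) (s + t) := by
  have leibniz (s t : ℤ) (Z Z' : A) : X * (Z * Z') - q ^ (2 * (s + t)) • (Z * Z' * X) =
      (X * Z - q ^ (2 * s) • (Z * X)) * Z' +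
        q ^ (2 * s) • (Z * (X * Z' - q ^ (2 * t) • (Z' * X))) := by
    rw [sub_mul, mul_sub, smul_sub, mul_smul_comm, smul_smul, mul_add, zpow_add₀ hq,
      smul_mul_assoc]
    simp only [mul_assoc]
    abel
  induction hN : n + k generalizing n k s t Z Z' with
  | zero =>
    obtain ⟨rfl, rfl⟩ : n = 0 ∧ k = 0 := by lia
    rw [mem_skewKer_succ, mem_skewKer_zero] at h h' ⊢
    rw [leibniz, h, h', zero_mul, mul_zero, smul_zero, add_zero]
  | succ N ih =>
    rw [mem_skewKer_succ] at h h'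
    rw [mem_skewKer_succ, leibniz]
    refine add_mem ?_ (Submodule.smul_mem _ _ ?_)
    · cases n with
      | zero => simp [mem_skewKer_zero.mp h]
      | succ n => simpa only [add_right_comm s 1 t] using ih h h' (by lia)
    · cases k with
      | zero => simp [mem_skewKer_zero.mp h']
      | succ k => simpa only [← add_assoc] using ih h h' (by lia)

lemma pow_mem_skewKer (hq : q ≠ 0) (h : qSerre q X Y = 0) (b : ℕ) :
    Y ^ b ∈ skewKer q X (2 * b + 1) (-b) := by
  induction b with
  | zero => simp [mem_skewKer_succ]
  | succ b ih =>
    have := mul_mem_skewKer hq ih ((qSerre_eq_zero_iff_mem_skewKer hq).mp h)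
    rwa [← pow_succ, ← neg_add, ← Nat.cast_succ] at this

lemma ne_zero_of_zpow_injective (hq : Function.Injective fun n : ℤ ↦ q ^ n) : q ≠ 0 := by
  rintro rfl
  exact absurd (@hq 1 2 (by norm_num)) (by norm_num)

lemma sum_coeff_smul_eq_zero (hq : Function.Injective fun n : ℤ ↦ q ^ n) {n : ℕ} {s : ℤ}
    (hZ : Z ∈ skewKer q X n s) {m : ℕ} {p : K[X]} (hp : p.natDegree ≤ m)
    (hroot : ∀ j < n, p.IsRoot (q ^ (2 * (s + j)))) :
    ∑ i ∈ range (m + 1), p.coeff i • (X ^ i * Z * X ^ (m - i)) = 0 := by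
  induction n generalizing s Z m p with
  | zero => simp [mem_skewKer_zero.mp hZ]
  | succ n ih =>
    obtain ⟨p, rfl⟩ := dvd_iff_isRoot.mpr (hroot 0 n.succ_pos)
    rcases eq_or_ne p 0 with rfl | hp0
    · simp
    rw [natDegree_mul (X_sub_C_ne_zero _) hp0, natDegree_X_sub_C] at hp
    obtain ⟨m, rfl⟩ := Nat.exists_eq_add_of_le' (by lia : 1 ≤ m)
    have hroot' : ∀ j < n, p.IsRoot (q ^ (2 * (s + 1 + j))) := fun j hj ↦ by
      have hmem := hroot (j + 1) (by lia)
      rw [root_mul, root_X_sub_C, Nat.cast_succ, add_comm (j : ℤ), ← add_assoc] at hmem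
      exact hmem.resolve_left fun h ↦ absurd (@hq (2 * (s + (0 : ℕ))) _ h) (by lia)
    rw [Nat.cast_zero, add_zero, ← ih (mem_skewKer_succ.mp hZ) (by lia : p.natDegree ≤ m) hroot']
    have hlast : p.coeff (m + 1) = 0 := coeff_eq_zero_of_natDegree_lt (by lia)
    simp only [sub_mul, coeff_sub, coeff_C_mul, sub_smul, sum_sub_distrib]
    rw [sum_range_succ', sum_range_succ (n := m + 1)]
    simp only [coeff_X_mul, coeff_X_mul_zero, hlast, mul_zero, zero_smul, add_zero]
    rw [← sum_sub_distrib]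
    refine sum_congr rfl fun i hi ↦ ?_
    have hi : i ≤ m := by simpa [Nat.lt_succ_iff] using hi
    rw [Nat.add_sub_add_right, Nat.sub_add_comm hi, pow_succ X i, pow_succ' X (m - i), mul_sub,
      sub_mul, mul_smul_comm, smul_mul_assoc, smul_sub, smul_smul, mul_comm (p.coeff i)]
    simp only [mul_assoc]

/-- The weight of the node `s ∈ I` in the divided-difference relations between the products
`X ^ s * Y ^ b * X ^ (m - s)`; it is the Lagrange weight of `q ^ (2 * s)` up to a power of `q`. -/
def qWeight (q : K) (I : Finset ℕ) (s : ℕ) : K :=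
  ∏ r ∈ I.erase s, (q ^ ((s : ℤ) - r) - q ^ ((r : ℤ) - s))

lemma qWeight_ne_zero (hq : Function.Injective fun n : ℤ ↦ q ^ n) (I : Finset ℕ) (s : ℕ) :
    qWeight q I s ≠ 0 :=
  prod_ne_zero_iff.mpr fun r hr ↦ sub_ne_zero.mpr fun h ↦
    ne_of_mem_erase hr (by have := hq h; lia)

lemma qWeight_reflect {I : Finset ℕ} {m s : ℕ} (hI : ∀ r ∈ I, r ≤ m) (hrefl : ∀ r ∈ I, m - r ∈ I)
    (heven : Even #I) (hs : s ∈ I) : qWeight q I (m - s) = -qWeight q I s := by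
  have hodd : Odd #(I.erase s) := by
    rw [card_erase_of_mem hs]
    exact Nat.Even.sub_odd (card_pos.mpr ⟨s, hs⟩) heven odd_one
  rw [qWeight, qWeight, ← neg_one_mul (∏ r ∈ I.erase s, _), ← hodd.neg_one_pow, ← prod_const,
    ← prod_mul_distrib]
  refine prod_nbij' (m - ·) (m - ·) ?_ ?_ ?_ ?_ ?_ <;> intro r hr <;>
    have hrI := hI r (mem_of_mem_erase hr) <;> have hsI := hI s hs
  · exact mem_erase.mpr ⟨by have := ne_of_mem_erase hr; lia, hrefl r (mem_of_mem_erase hr)⟩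
  · exact mem_erase.mpr ⟨by have := ne_of_mem_erase hr; lia, hrefl r (mem_of_mem_erase hr)⟩
  · lia
  · lia
  · rw [Nat.cast_sub hsI, Nat.cast_sub hrI, neg_one_mul, neg_sub]
    ring_nf

lemma prod_sq_sub_sq_eq (hq : q ≠ 0) {I : Finset ℕ} {b s : ℕ} (hI : #I = 2 * b + 2) (hs : s ∈ I) :
    ∏ r ∈ I.erase s, (q ^ (2 * s) - q ^ (2 * r)) =
      q ^ (2 * b * s + ∑ r ∈ I, r) * qWeight q I s := by
  have hexp : ∑ r ∈ I.erase s, (s + r) = 2 * b * s + ∑ r ∈ I, r := by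
    have h₁ := sum_erase_add I (s + ·) hs
    have h₂ : ∑ r ∈ I, (s + r) = (2 * b + 2) * s + ∑ r ∈ I, r := by
      rw [sum_add_distrib, sum_const, hI, smul_eq_mul]
    linarith
  rw [← hexp, ← prod_pow_eq_pow_sum, qWeight, ← prod_mul_distrib]
  refine prod_congr rfl fun r _ ↦ ?_
  rw [mul_sub, ← zpow_natCast q (s + r), ← zpow_add₀ hq, ← zpow_add₀ hq]
  push_cast
  ring_nf
  norm_cast

lemma sum_qWeight_inv_mul_zpow (hq : Function.Injective fun n : ℤ ↦ q ^ n)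
    {I : Finset ℕ} {b j : ℕ} (hI : #I = 2 * b + 2) (hj : j ≤ 2 * b) :
    ∑ s ∈ I, (qWeight q I s)⁻¹ * (q ^ (2 * (-(b : ℤ) + j))) ^ s = 0 := by
  have hq0 := ne_zero_of_zpow_injective hq
  have hinj : Set.InjOn (fun s : ℕ ↦ q ^ (2 * s)) I := fun s _ r _ h ↦ by
    have := @hq (2 * s : ℕ) (2 * r : ℕ) (by simpa only [zpow_natCast] using h)
    lia
  have hdeg : (X ^ j : K[X]).degree < #I := by
    rw [degree_X_pow, hI]
    exact_mod_cast (by lia : j < 2 * b + 2)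
  have hsum := Lagrange.coeff_eq_sum hinj hdeg
  rw [coeff_X_pow, if_neg (by lia)] at hsum
  rw [← mul_eq_zero_iff_left (pow_ne_zero (∑ r ∈ I, r) (inv_ne_zero hq0)), hsum, mul_sum]
  refine sum_congr rfl fun s hs ↦ ?_
  have hpow : (q ^ (2 * (-(b : ℤ) + j))) ^ s = q ^ (2 * s * j) * (q ^ (2 * b * s))⁻¹ := by
    rw [← zpow_natCast, ← zpow_mul, ← zpow_natCast q (2 * s * j), ← zpow_natCast q (2 * b * s),
      ← zpow_neg, ← zpow_add₀ hq0]
    push_cast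
    ring_nf
  rw [prod_sq_sub_sq_eq hq0 hI hs, eval_pow, eval_X, ← pow_mul, hpow, pow_add, inv_pow]
  ring

lemma sum_qWeight_inv_smul_eq_zero (hq : Function.Injective fun n : ℤ ↦ q ^ n)
    (h : qSerre q X Y = 0) {I : Finset ℕ} {b m : ℕ} (hI : #I = 2 * b + 2) (hIm : ∀ s ∈ I, s ≤ m) :
    ∑ s ∈ I, (qWeight q I s)⁻¹ • (X ^ s * Y ^ b * X ^ (m - s)) = 0 := by
  set p : K[X] := ∑ s ∈ I, C (qWeight q I s)⁻¹ * Polynomial.X ^ s with hp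
  have hdeg : p.natDegree ≤ m := natDegree_sum_le_of_forall_le _ _ fun s hs ↦
    (natDegree_C_mul_X_pow_le _ s).trans (hIm s hs)
  have hroot : ∀ j < 2 * b + 1, p.IsRoot (q ^ (2 * (-(b : ℤ) + j))) := fun j hj ↦ by
    rw [IsRoot, hp, eval_finsetSum, ← sum_qWeight_inv_mul_zpow hq hI (Nat.le_of_lt_succ hj)]
    simp
  rw [← sum_coeff_smul_eq_zero hq (pow_mem_skewKer (ne_zero_of_zpow_injective hq) h b) hdeg hroot]
  have hsub : I ⊆ range (m + 1) := fun s hs ↦ mem_range_succ_iff.mpr (hIm s hs)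
  have hcoeff (i : ℕ) : p.coeff i = if i ∈ I then (qWeight q I i)⁻¹ else 0 := by
    simp [hp, coeff_X_pow]
  simp only [hcoeff, ite_smul, zero_smul, ← sum_filter, filter_mem_eq_inter,
    inter_eq_right.mpr hsub]

/- The relation on the `2 * b + 2` nodes `i`, `s ≤ b` and `m - b < s ≤ m` can be solved for the term
at `i`. -/
lemma pow_mul_pow_mul_pow_mem (hq : Function.Injective fun n : ℤ ↦ q ^ n)
    (h : qSerre q X Y = 0) {S : Submodule K A} {b m : ℕ}
    (hS : ∀ s ≤ m, s ≤ b ∨ m < s + b → X ^ s * Y ^ b * X ^ (m - s) ∈ S) {i : ℕ} (hi : i ≤ m) :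
    X ^ i * Y ^ b * X ^ (m - i) ∈ S := by
  by_cases hend : i ≤ b ∨ m < i + b
  · exact hS i hi hend
  set I := range (b + 1) ∪ Ico (m - b + 1) (m + 1)
  have mem_I {s : ℕ} : s ∈ I ↔ s ≤ b ∨ m < s + b ∧ s ≤ m := by
    simp only [I, mem_union, mem_range, mem_Ico]
    lia
  have hiI : i ∉ I := by rw [mem_I]; lia
  have hcard : #(insert i I) = 2 * b + 2 := by
    rw [card_insert_of_notMem hiI,
      card_union_of_disjoint (disjoint_left.mpr fun s ↦ by simp; lia), card_range, Nat.card_Ico]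
    lia
  have hIm : ∀ s ∈ I, s ≤ m := fun s hs ↦ by rw [mem_I] at hs; lia
  have hsum := sum_qWeight_inv_smul_eq_zero hq h hcard (forall_mem_insert _ _ _ |>.mpr ⟨hi, hIm⟩)
  rw [sum_insert hiI, add_eq_zero_iff_eq_neg] at hsum
  rw [← S.smul_mem_iff (inv_ne_zero (qWeight_ne_zero hq (insert i I) i)), hsum]
  refine neg_mem (sum_mem fun s hs ↦ S.smul_mem _ (hS s (hIm s hs) ?_))
  exact (mem_I.mp hs).imp_right And.left

/- On the nodes `s ≤ a` and `d ≤ s ≤ d + a`, a set symmetric under `s ↦ d + a - s`, the weights at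
`a` and `d` are opposite. -/
lemma pow_mul_pow_mul_pow_sub_mem (hq : Function.Injective fun n : ℤ ↦ q ^ n)
    (h : qSerre q X Y = 0) {S : Submodule K A} {a d : ℕ} (had : a ≤ d)
    (hS : ∀ s ≤ d + a, s < a ∨ d < s → X ^ s * Y ^ a * X ^ (d + a - s) ∈ S) :
    X ^ a * Y ^ a * X ^ d - X ^ d * Y ^ a * X ^ a ∈ S := by
  obtain rfl | had := had.eq_or_lt
  · simp
  set I := range (a + 1) ∪ Ico d (d + a + 1)
  have mem_I {s : ℕ} : s ∈ I ↔ s ≤ a ∨ d ≤ s ∧ s ≤ d + a := by simp [I]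
  have haI : a ∈ I := mem_I.mpr (.inl le_rfl)
  have hdI : d ∈ I.erase a := mem_erase.mpr ⟨had.ne', mem_I.mpr (.inr ⟨le_rfl, by lia⟩)⟩
  have hcard : #I = 2 * a + 2 := by
    rw [card_union_of_disjoint (disjoint_left.mpr fun s ↦ by simp; lia), card_range, Nat.card_Ico]
    lia
  have hIm : ∀ s ∈ I, s ≤ d + a := fun s hs ↦ by rw [mem_I] at hs; lia
  have hweight : qWeight q I d = -qWeight q I a := by
    rw [← qWeight_reflect hIm (fun s hs ↦ by rw [mem_I] at hs ⊢; lia) ⟨a + 1, by lia⟩ haI,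
      Nat.add_sub_cancel]
  have hsum := sum_qWeight_inv_smul_eq_zero hq h hcard hIm
  rw [← add_sum_erase _ _ haI, ← add_sum_erase _ _ hdI, ← add_assoc, hweight, inv_neg, neg_smul,
    ← sub_eq_add_neg, ← smul_sub, Nat.add_sub_cancel, Nat.add_sub_cancel_left,
    add_eq_zero_iff_eq_neg] at hsum
  rw [← S.smul_mem_iff (inv_ne_zero (qWeight_ne_zero hq I a)), hsum]
  refine neg_mem (sum_mem fun s hs ↦ S.smul_mem _ (hS s ?_ ?_)) <;>
    simp only [mem_erase, mem_I] at hs <;> lia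

end Serre

/-! ### Ladders and alternating words -/

section Ladder

variable {K M M' : Type*} [Field K] [AddCommGroup M] [Module K M] [AddCommGroup M'] [Module K M']
  {q : K} {R L : Module.End K M} {U : ℤ → Submodule K M}

/-- `R` lowers and `L` raises the degree by one with respect to the family `U`. -/
structure IsLadder (R L : Module.End K M) (U : ℤ → Submodule K M) : Prop where
  lower : ∀ ⦃n u⦄, u ∈ U n → R u ∈ U (n - 1)
  raise : ∀ ⦃n u⦄, u ∈ U n → L u ∈ U (n + 1)

/-- A ladder which vanishes in negative degrees and whose two operators satisfy the cubic `q`-Serre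
relations. -/
structure IsSerreLadder (q : K) (R L : Module.End K M) (U : ℤ → Submodule K M) : Prop
    extends IsLadder R L U where
  eq_bot : ∀ ⦃n⦄, n < 0 → U n = ⊥
  serre_lower : qSerre q R L = 0
  serre_raise : qSerre q L R = 0

lemma IsLadder.swap (h : IsLadder R L U) : IsLadder L R fun n ↦ U (-n) where
  lower n u hu := by simpa only [neg_sub', sub_neg_eq_add] using h.raise hu
  raise n u hu := by simpa only [neg_add'] using h.lower hu

lemma IsLadder.pow_lower (h : IsLadder R L U) (a : ℕ) {n : ℤ} {u : M} (hu : u ∈ U n) :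
    (R ^ a) u ∈ U (n - a) := by
  induction a with
  | zero => simpa using hu
  | succ a ih =>
    rw [pow_succ', Module.End.mul_apply, Nat.cast_succ, ← sub_sub]
    exact h.lower ih

lemma IsLadder.pow_raise (h : IsLadder R L U) (a : ℕ) {n : ℤ} {u : M} (hu : u ∈ U n) :
    (L ^ a) u ∈ U (n + a) := by
  have := h.swap.pow_lower a (n := -n) (by rwa [neg_neg])
  rwa [neg_sub', neg_neg, sub_neg_eq_add] at this

lemma IsSerreLadder.eq_zero (h : IsSerreLadder q R L U) {n : ℤ} (hn : n < 0) {u : M}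
    (hu : u ∈ U n) : u = 0 := by
  rwa [h.eq_bot hn, Submodule.mem_bot] at hu

lemma IsSerreLadder.prod {R' L' : Module.End K M'} {U' : ℤ → Submodule K M'}
    (h : IsSerreLadder q R L U) (h' : IsSerreLadder q R' L' U') :
    IsSerreLadder q (R.prodMap R') (L.prodMap L') fun n ↦ (U n).prod (U' n) where
  lower _ _ hu := ⟨h.lower hu.1, h'.lower hu.2⟩
  raise _ _ hu := ⟨h.raise hu.1, h'.raise hu.2⟩
  eq_bot _ hn := by rw [h.eq_bot hn, h'.eq_bot hn, Submodule.prod_bot]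
  serre_lower := by rw [qSerre_prodMap, h.serre_lower, h'.serre_lower, LinearMap.prodMap_zero]
  serre_raise := by rw [qSerre_prodMap, h.serre_raise, h'.serre_raise, LinearMap.prodMap_zero]

lemma IsSerreLadder.reverse (h : IsSerreLadder q R L U) {d : ℤ} (hd : ∀ n, d < n → U n = ⊥) :
    IsSerreLadder q L R fun n ↦ U (d - n) where
  lower n u hu := by simpa only [sub_sub_eq_add_sub, sub_add_eq_add_sub] using h.raise hu
  raise n u hu := by simpa only [sub_sub] using h.lower hu
  eq_bot _ hn := hd _ (by lia)
  serre_lower := h.serre_raise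
  serre_raise := h.serre_lower

lemma IsSerreLadder.pow_raise_lower_raise (h : IsSerreLadder q R L U)
    (hq : Function.Injective fun n : ℤ ↦ q ^ n) {d : ℕ} (hd : ∀ n : ℤ, d < n → U n = ⊥) (a : ℕ)
    {u : M} (hu : u ∈ U 0) :
    (L ^ a) ((R ^ a) ((L ^ d) u)) = (L ^ d) ((R ^ a) ((L ^ a) u)) := by
  have raise_eq_zero {c : ℕ} (hc : d < c) : (L ^ c) u = 0 := by
    simpa only [hd (0 + c) (by lia), Submodule.mem_bot] using h.pow_raise c hu
  have lower_eq_zero {c : ℕ} (hc : c < a) : (R ^ a) ((L ^ c) u) = 0 :=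
    h.eq_zero (by lia) (h.pow_lower a (h.pow_raise c hu))
  rcases le_or_gt a d with had | had
  · refine sub_eq_zero.mp (pow_mul_pow_mul_pow_sub_mem hq h.serre_raise had
      (S := LinearMap.ker (LinearMap.applyₗ u)) fun s hs hsad ↦ ?_)
    rw [LinearMap.mem_ker, LinearMap.applyₗ_apply_apply, Module.End.mul_apply, Module.End.mul_apply]
    rcases hsad with hsa | hsd
    · rw [raise_eq_zero (by lia), map_zero, map_zero]
    · rw [lower_eq_zero (by lia), map_zero]
  · rw [raise_eq_zero had, lower_eq_zero had, map_zero, map_zero, map_zero]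

/-- The word `R ^ a₁ * L ^ a₂ * R ^ a₃ * ⋯` with the given list of exponents. -/
def zigzag (R L : Module.End K M) : List ℕ → Module.End K M
  | [] => 1
  | a :: z => R ^ a * zigzag L R z

/-- The alternating sum of a list of exponents: the number of degrees by which `zigzag R L z` lowers
a ladder. -/
def zigzagDrop (z : List ℕ) : ℤ := (z.map ((↑) : ℕ → ℤ)).alternatingSum

lemma zigzagDrop_cons (a : ℕ) (z : List ℕ) : zigzagDrop (a :: z) = a - zigzagDrop z := by
  rw [zigzagDrop, List.map_cons, List.alternatingSum_cons, zigzagDrop]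

lemma zigzagDrop_append (p z : List ℕ) :
    zigzagDrop (p ++ z) = zigzagDrop p + (-1) ^ p.length * zigzagDrop z := by
  simp [zigzagDrop, List.alternatingSum_append]

lemma zigzag_append_of_even {p : List ℕ} (hp : Even p.length) (z : List ℕ) :
    zigzag R L (p ++ z) = zigzag R L p * zigzag R L z := by
  match p, hp with
  | [], _ => rw [List.nil_append, zigzag, one_mul]
  | [_], hp => simp at hp
  | a :: b :: p, hp =>
    have hp' : Even p.length := by simpa [Nat.even_add_one] using hp
    simp only [List.cons_append, zigzag, zigzag_append_of_even hp', mul_assoc]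

lemma IsLadder.zigzag_mem (h : IsLadder R L U) (z : List ℕ) {n : ℤ} {u : M} (hu : u ∈ U n) :
    zigzag R L z u ∈ U (n - zigzagDrop z) := by
  induction z generalizing R L U n with
  | nil => simpa [zigzag, zigzagDrop] using hu
  | cons a z ih =>
    have := h.pow_lower a (ih h.swap (n := -n) (by rwa [neg_neg]))
    rwa [neg_sub', neg_neg, sub_sub, neg_add_eq_sub, ← zigzagDrop_cons] at this

lemma zigzag_transfer (hq : Function.Injective fun n : ℤ ↦ q ^ n) (hRL : qSerre q R L = 0)
    (hLR : qSerre q L R = 0) {S : Submodule K (Module.End K M)} {p z : List ℕ} {b m : ℕ}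
    (hS : ∀ s ≤ m, s ≤ b ∨ m < s + b → zigzag R L (p ++ s :: b :: (m - s) :: z) ∈ S) {i : ℕ}
    (hi : i ≤ m) : zigzag R L (p ++ i :: b :: (m - i) :: z) ∈ S := by
  induction p generalizing R L S with
  | nil =>
    have := pow_mul_pow_mul_pow_mem hq hRL (i := i)
      (S := S.comap (LinearMap.mulRight K (zigzag L R z))) fun s hs hend ↦ by
        simpa only [List.nil_append, zigzag, mul_assoc, Submodule.mem_comap,
          LinearMap.mulRight_apply] using hS s hs hend
    simpa only [List.nil_append, zigzag, mul_assoc, Submodule.mem_comap,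
      LinearMap.mulRight_apply] using this hi
  | cons a p ih => exact ih hLR hRL (S := S.comap (LinearMap.mulLeft K (R ^ a))) hS

lemma zigzag_mem_of_forall_append (hq : Function.Injective fun n : ℤ ↦ q ^ n)
    (hRL : qSerre q R L = 0) (hLR : qSerre q L R = 0) {S : Submodule K (Module.End K M)} {N b : ℕ}
    (hsmall : ∀ e < b, ∀ z : List ℕ, e ∈ z → z.length = N → zigzagDrop z = 0 → zigzag R L z ∈ S)
    {p : List ℕ} (hp : ∀ z, (p ++ b :: z).length = N → zigzagDrop (p ++ b :: z) = 0 →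
      zigzag R L (p ++ b :: z) ∈ S)
    {x y : ℕ} {z : List ℕ} (hlen : (p ++ x :: b :: y :: z).length = N)
    (hdrop : zigzagDrop (p ++ x :: b :: y :: z) = 0) :
    zigzag R L (p ++ x :: b :: y :: z) ∈ S := by
  have hlen' (s t : ℕ) : (p ++ s :: b :: t :: z).length = N := by simpa using hlen
  have hdrop' {s : ℕ} (hs : s ≤ x + y) : zigzagDrop (p ++ s :: b :: (x + y - s) :: z) = 0 := by
    rw [← hdrop]
    simp only [zigzagDrop_append, zigzagDrop_cons, Nat.cast_sub hs, Nat.cast_add]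
    ring
  have hends : ∀ s ≤ x + y, s ≤ b ∨ x + y < s + b →
      zigzag R L (p ++ s :: b :: (x + y - s) :: z) ∈ S := by
    rintro s hs (hsb | hbs)
    · obtain rfl | hsb := hsb.eq_or_lt
      · exact hp _ (hlen' _ _) (hdrop' hs)
      · exact hsmall s hsb _ (by simp) (hlen' _ _) (hdrop' hs)
    · exact hsmall (x + y - s) (by lia) _ (by simp) (hlen' _ _) (hdrop' hs)
  simpa only [Nat.add_sub_cancel_left] using zigzag_transfer hq hRL hLR hends (Nat.le_add_right x y)

section Words

variable (h : IsSerreLadder q R L U) {W : Submodule K M} (hWU : W ≤ U 0)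
  (hW : ∀ a, R ^ a * L ^ a ∈ W.compatibleMaps W) {b : ℕ}

include h hWU hW

lemma IsSerreLadder.zigzag_cons_cons_mem {y : ℕ} {z : List ℕ} (hby : b ≤ y)
    (hz : zigzagDrop z = 0 → zigzag R L z ∈ W.compatibleMaps W)
    (hdrop : zigzagDrop (b :: y :: z) = 0) : zigzag R L (b :: y :: z) ∈ W.compatibleMaps W := by
  rw [zigzagDrop_cons, zigzagDrop_cons] at hdrop
  intro w hw
  rw [Submodule.mem_comap, zigzag, zigzag, ← mul_assoc, Module.End.mul_apply]
  obtain rfl | hlt := hby.eq_or_lt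
  · exact hW b (hz (by lia) hw)
  · rw [h.eq_zero (by lia) (h.zigzag_mem z (hWU hw)), map_zero]
    exact W.zero_mem

lemma IsSerreLadder.zigzag_append_pair_mem {x : ℕ} {p : List ℕ} (hp : Even p.length) (hbx : b ≤ x)
    (hmem : zigzagDrop p = 0 → zigzag R L p ∈ W.compatibleMaps W)
    (hdrop : zigzagDrop (p ++ [x, b]) = 0) : zigzag R L (p ++ [x, b]) ∈ W.compatibleMaps W := by
  rw [zigzagDrop_append, hp.neg_one_pow, one_mul, zigzagDrop_cons, zigzagDrop_cons,
    show zigzagDrop [] = 0 from rfl] at hdrop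
  intro w hw
  rw [Submodule.mem_comap, zigzag_append_of_even hp, zigzag, zigzag, zigzag, mul_one,
    Module.End.mul_apply]
  obtain rfl | hlt := hbx.eq_or_lt
  · exact hmem (by lia) (hW b hw)
  · rw [Module.End.mul_apply,
      h.eq_zero (by lia) (h.pow_lower x (h.pow_raise b (hWU hw))), map_zero]
    exact W.zero_mem

lemma IsSerreLadder.zigzag_mem_of_min (hq : Function.Injective fun n : ℤ ↦ q ^ n) {N : ℕ}
    (hN : Even N)
    (hshort : ∀ z : List ℕ, z.length + 2 = N → zigzagDrop z = 0 →
      zigzag R L z ∈ W.compatibleMaps W)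
    (hsmall : ∀ e < b, ∀ z : List ℕ, e ∈ z → z.length = N → zigzagDrop z = 0 →
      zigzag R L z ∈ W.compatibleMaps W)
    (p z : List ℕ) (hlen : (p ++ b :: z).length = N) (hdrop : zigzagDrop (p ++ b :: z) = 0) :
    zigzag R L (p ++ b :: z) ∈ W.compatibleMaps W := by
  induction p using List.reverseRecOn generalizing z with
  | nil =>
    match z, hlen with
    | [], hlen => exact absurd hN (by simp [← hlen])
    | y :: z, hlen =>
      rw [List.nil_append] at hlen hdrop ⊢
      rcases le_or_gt b y with hby | hyb
      · exact h.zigzag_cons_cons_mem hWU hW hby (hshort z (by simpa using hlen)) hdrop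
      · exact hsmall y hyb _ (by simp) hlen hdrop
  | append_singleton p x ih =>
    rw [List.append_assoc, List.singleton_append] at hlen hdrop ⊢
    rcases lt_or_ge x b with hxb | hbx
    · exact hsmall x hxb _ (by simp) hlen hdrop
    match z, hlen with
    | [], hlen =>
      have hlen' : p.length + 2 = N := by simpa using hlen
      exact h.zigzag_append_pair_mem hWU hW ((Nat.even_add.mp (hlen' ▸ hN)).mpr even_two) hbx
        (hshort p hlen') hdrop
    | y :: z, hlen =>
      exact zigzag_mem_of_forall_append hq h.serre_lower h.serre_raise hsmall ih hlen hdrop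

/- The induction is on the length of the word, then on its smallest exponent `b`, then on the
position of a block with that exponent, which is moved to the left end by `zigzag_transfer`. -/
theorem IsSerreLadder.zigzag_mem_compatibleMaps (hq : Function.Injective fun n : ℤ ↦ q ^ n)
    {z : List ℕ} (hz : Even z.length) (hdrop : zigzagDrop z = 0) :
    zigzag R L z ∈ W.compatibleMaps W := by
  induction hn : z.length using Nat.strong_induction_on generalizing z with
  | _ n ih =>
    subst hn
    have hshort : ∀ z' : List ℕ, z'.length + 2 = z.length → zigzagDrop z' = 0 →
        zigzag R L z' ∈ W.compatibleMaps W := fun z' hlen hdrop' ↦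
      ih _ (by lia) ((Nat.even_add.mp (hlen ▸ hz)).mpr even_two) hdrop' rfl
    have hall : ∀ b, ∀ z' : List ℕ, b ∈ z' → z'.length = z.length → zigzagDrop z' = 0 →
        zigzag R L z' ∈ W.compatibleMaps W := fun b ↦ by
      induction b using Nat.strong_induction_on with
      | _ b ihb =>
        intro z' hb hlen hdrop'
        obtain ⟨p, s, rfl⟩ := List.append_of_mem hb
        exact h.zigzag_mem_of_min hWU hW hq hz hshort ihb p s hlen hdrop'
    match z, hdrop, hall with
    | [], _, _ => exact fun w hw ↦ hw
    | b :: z, hdrop, hall => exact hall b _ (by simp) rfl hdrop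

end Words

/-- The submodule obtained from `W` by applying all words `R ^ a₁ * L ^ a₂ * ⋯ * L ^ a₂ₙ`, that is,
the submodule generated by `W` under `R` and `L`. -/
def wordSpan (R L : Module.End K M) (W : Submodule K M) : Submodule K M :=
  ⨆ z : {z : List ℕ // Even z.length}, W.map (zigzag R L z)

lemma map_zigzag_le_wordSpan (W : Submodule K M) {z : List ℕ} (hz : Even z.length) :
    W.map (zigzag R L z) ≤ wordSpan R L W :=
  le_iSup (fun z : {z : List ℕ // Even z.length} ↦ W.map (zigzag R L z)) ⟨z, hz⟩

lemma wordSpan_le {W N : Submodule K M}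
    (h : ∀ z : List ℕ, Even z.length → ∀ w ∈ W, zigzag R L z w ∈ N) : wordSpan R L W ≤ N :=
  iSup_le fun z ↦ Submodule.map_le_iff_le_comap.mpr fun w hw ↦ h z z.2 w hw

lemma zigzag_mem_wordSpan {W : Submodule K M} {z : List ℕ} (hz : Even z.length) {w : M}
    (hw : w ∈ W) : zigzag R L z w ∈ wordSpan R L W :=
  map_zigzag_le_wordSpan W hz (Submodule.mem_map_of_mem hw)

lemma le_wordSpan (W : Submodule K M) : W ≤ wordSpan R L W := fun _ hw ↦
  zigzag_mem_wordSpan (z := []) Even.zero hw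

lemma wordSpan_mem_invtSubmodule_lower (W : Submodule K M) :
    wordSpan R L W ∈ R.invtSubmodule :=
  wordSpan_le fun z hz w hw ↦ by
    have : zigzag R L (1 :: 0 :: z) w ∈ wordSpan R L W :=
      zigzag_mem_wordSpan (by simpa [Nat.even_add_one] using hz) hw
    simpa [zigzag] using this

lemma wordSpan_mem_invtSubmodule_raise (W : Submodule K M) :
    wordSpan R L W ∈ L.invtSubmodule :=
  wordSpan_le fun z hz w hw ↦ by
    have : zigzag R L (0 :: 1 :: z) w ∈ wordSpan R L W :=
      zigzag_mem_wordSpan (by simpa [Nat.even_add_one] using hz) hw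
    simpa [zigzag] using this

lemma IsLadder.wordSpan_mem_invtSubmodule_of_apply_eq_add_smul (h : IsLadder R L U)
    {W : Submodule K M} (hWU : W ≤ U 0) {f g : Module.End K M}
    (hg : wordSpan R L W ∈ g.invtSubmodule) {c : ℤ → K}
    (hf : ∀ n, ∀ u ∈ U n, f u = g u + c n • u) : wordSpan R L W ∈ f.invtSubmodule :=
  wordSpan_le fun z hz w hw ↦ by
    have hmem := zigzag_mem_wordSpan (R := R) (L := L) hz hw
    rw [Submodule.mem_comap, hf _ _ (h.zigzag_mem z (hWU hw))]
    exact add_mem (hg hmem) (Submodule.smul_mem _ _ hmem)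

lemma IsSerreLadder.wordSpan_inf_le (h : IsSerreLadder q R L U) (hU : iSupIndep U)
    (hq : Function.Injective fun n : ℤ ↦ q ^ n) {W : Submodule K M} (hWU : W ≤ U 0)
    (hW : ∀ a, R ^ a * L ^ a ∈ W.compatibleMaps W) : wordSpan R L W ⊓ U 0 ≤ W := by
  have hle : wordSpan R L W ≤ W ⊔ ⨆ n ≠ 0, U n := wordSpan_le fun z hz w hw ↦ by
    by_cases hdrop : zigzagDrop z = 0
    · exact Submodule.mem_sup_left (h.zigzag_mem_compatibleMaps hWU hW hq hz hdrop hw)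
    · refine Submodule.mem_sup_right (Submodule.mem_iSup_of_mem (0 - zigzagDrop z)
        (Submodule.mem_iSup_of_mem (by lia) (h.zigzag_mem z (hWU hw))))
  calc wordSpan R L W ⊓ U 0 ≤ (W ⊔ ⨆ n ≠ 0, U n) ⊓ U 0 := inf_le_inf_right _ hle
    _ = W ⊔ (⨆ n ≠ 0, U n) ⊓ U 0 := sup_inf_assoc_of_le _ hWU
    _ = W := by rw [(hU 0).symm.eq_bot, sup_bot_eq]

end Ladder

/-! ### Split decompositions -/

section SplitDecomposition

variable {K M : Type*} [Field K] [AddCommGroup M] [Module K M] {q : K} {d : ℤ}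
  {x y R L : Module.End K M} {U : ℤ → Submodule K M}

/-- `f₀` is homogeneous of degree `e` for `U`, and `f - f₀` only has terms of larger degree. -/
def HasLeadingPart (U : ℤ → Submodule K M) (e : ℤ) (f f₀ : Module.End K M) : Prop :=
  ∀ ⦃n u⦄, u ∈ U n → f₀ u ∈ U (n + e) ∧ (f - f₀) u ∈ ⨆ l > n + e, U l

lemma mem_biSup_gt {m n : ℤ} (hmn : m < n) {u : M} (hu : u ∈ U n) : u ∈ ⨆ l > m, U l :=
  Submodule.mem_iSup_of_mem n (Submodule.mem_iSup_of_mem hmn hu)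

lemma ext_of_iSup_eq_top (hU : ⨆ n, U n = ⊤) {f g : Module.End K M}
    (h : ∀ n, ∀ u ∈ U n, f u = g u) : f = g := by
  rw [← LinearMap.eqLocus_eq_top, eq_top_iff, ← hU]
  exact iSup_le h

namespace HasLeadingPart

variable {e e' : ℤ} {f f₀ g g₀ : Module.End K M}

lemma of_mem (hf : ∀ ⦃n u⦄, u ∈ U n → f u ∈ U (n + e)) : HasLeadingPart U e f f :=
  fun n u hu ↦ ⟨hf hu, by simp⟩

lemma add (hf : HasLeadingPart U e f f₀) (hg : HasLeadingPart U e g g₀) :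
    HasLeadingPart U e (f + g) (f₀ + g₀) := fun n u hu ↦ by
  rw [add_sub_add_comm]
  exact ⟨add_mem (hf hu).1 (hg hu).1, add_mem (hf hu).2 (hg hu).2⟩

lemma sub (hf : HasLeadingPart U e f f₀) (hg : HasLeadingPart U e g g₀) :
    HasLeadingPart U e (f - g) (f₀ - g₀) := fun n u hu ↦ by
  rw [sub_sub_sub_comm]
  exact ⟨sub_mem (hf hu).1 (hg hu).1, sub_mem (hf hu).2 (hg hu).2⟩

lemma smul (c : K) (hf : HasLeadingPart U e f f₀) : HasLeadingPart U e (c • f) (c • f₀) :=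
  fun n u hu ↦ by
    rw [← smul_sub]
    exact ⟨Submodule.smul_mem _ _ (hf hu).1, Submodule.smul_mem _ _ (hf hu).2⟩

lemma map_biSup_gt_le (hf : HasLeadingPart U e f f₀) (m : ℤ) :
    (⨆ l > m, U l) ≤ (⨆ l > m + e, U l).comap f :=
  iSup₂_le fun n hn u hu ↦ by
    rw [Submodule.mem_comap, ← sub_add_cancel (f u) (f₀ u)]
    have hle : (⨆ l > n + e, U l) ≤ ⨆ l > m + e, U l := biSup_mono fun l hl ↦ by lia
    exact add_mem (hle (hf hu).2) (mem_biSup_gt (by lia) (hf hu).1)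

lemma mul (hf : HasLeadingPart U e f f₀) (hg : HasLeadingPart U e' g g₀) :
    HasLeadingPart U (e' + e) (f * g) (f₀ * g₀) := fun n u hu ↦ by
  have hsub : f * g - f₀ * g₀ = f * (g - g₀) + (f - f₀) * g₀ := by
    rw [mul_sub, sub_mul, sub_add_sub_cancel]
  rw [hsub, ← add_assoc]
  exact ⟨(hf (hg hu).1).1, add_mem (hf.map_biSup_gt_le _ (hg hu).2) (hf (hg hu).1).2⟩

lemma pow (hf : HasLeadingPart U e f f₀) (k : ℕ) : HasLeadingPart U (k * e) (f ^ k) (f₀ ^ k) := by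
  induction k with
  | zero => exact of_mem fun n u hu ↦ by simpa using hu
  | succ k ih => simpa only [pow_succ', Nat.cast_succ, add_mul, one_mul] using hf.mul ih

lemma qSerre (hf : HasLeadingPart U e f f₀) (hg : HasLeadingPart U e' g g₀) :
    HasLeadingPart U (3 * e + e') (qSerre q f g) (qSerre q f₀ g₀) := by
  have word {i j : ℕ} (hij : i + j = 3) :
      HasLeadingPart U (3 * e + e') (f ^ i * g * f ^ j) (f₀ ^ i * g₀ * f₀ ^ j) := by
    convert ((hf.pow i).mul hg).mul (hf.pow j) using 1
    rw [show (3 : ℤ) = (i + j : ℕ) by rw [hij]; rfl]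
    push_cast
    ring
  have := (((word (i := 3) (j := 0) rfl).sub ((word (i := 2) (j := 1) rfl).smul
    (q ^ 2 + 1 + q⁻¹ ^ 2))).add ((word (i := 1) (j := 2) rfl).smul (q ^ 2 + 1 + q⁻¹ ^ 2))).sub
    (word (i := 0) (j := 3) rfl)
  simpa only [_root_.qSerre, pow_zero, pow_one, one_mul, mul_one] using this

lemma eq_zero (hU : iSupIndep U) (hsup : ⨆ n, U n = ⊤) (hf : HasLeadingPart U e 0 f₀) :
    f₀ = 0 := by
  refine ext_of_iSup_eq_top hsup fun n u hu ↦ ?_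
  have hgt : f₀ u ∈ ⨆ l > n + e, U l := by simpa using (hf hu).2
  have hle : (⨆ l > n + e, U l) ≤ ⨆ l ≠ n + e, U l := biSup_mono fun l hl ↦ ne_of_gt hl
  exact Submodule.disjoint_def.mp (hU (n + e)) _ (hf hu).1 (hle hgt)

end HasLeadingPart

lemma exists_forall_apply_eq_smul (hind : iSupIndep U) (hsup : ⨆ n, U n = ⊤) (c : ℤ → K) :
    ∃ f : Module.End K M, ∀ n, ∀ u ∈ U n, f u = c n • u := by
  classical
  let e := LinearEquiv.ofBijective (DirectSum.coeLinearMap U)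
    (DirectSum.isInternal_submodule_of_iSupIndep_of_iSup_eq_top hind hsup)
  refine ⟨DirectSum.toModule K ℤ M (fun n ↦ c n • (U n).subtype) ∘ₗ e.symm.toLinearMap,
    fun n u hu ↦ ?_⟩
  have he : e.symm u = DirectSum.lof K ℤ (fun n ↦ U n) n ⟨u, hu⟩ :=
    e.symm_apply_eq.mpr (DirectSum.coeLinearMap_lof U n ⟨u, hu⟩).symm
  simp [he]

/-- A decomposition `U` of the underlying space on which `x` acts as `q ^ (d - 2 * n)` modulo a
lowering term, and `y` as `q ^ (2 * n - d)` modulo a raising term. -/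
structure IsSplitDecomposition (q : K) (d : ℤ) (x y : Module.End K M) (U : ℤ → Submodule K M) :
    Prop where
  iSupIndep : iSupIndep U
  iSup_eq_top : ⨆ n, U n = ⊤
  lower : ∀ ⦃n u⦄, u ∈ U n → x u - q ^ (d - 2 * n) • u ∈ U (n - 1)
  raise : ∀ ⦃n u⦄, u ∈ U n → y u - q ^ (2 * n - d) • u ∈ U (n + 1)

namespace IsSplitDecomposition

lemma swap (h : IsSplitDecomposition q d x y U) :
    IsSplitDecomposition q (-d) y x fun n ↦ U (-n) where
  iSupIndep := h.iSupIndep.comp neg_injective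
  iSup_eq_top := h.iSup_eq_top ▸ (Equiv.neg ℤ).iSup_comp (g := U)
  lower n u hu := by
    have := h.raise hu
    rwa [mul_neg, neg_sub_comm, neg_add_eq_sub, ← neg_sub n 1] at this
  raise n u hu := by
    have := h.lower hu
    rwa [mul_neg, sub_neg_eq_add, add_comm d, ← sub_neg_eq_add (2 * n), ← neg_add'] at this

/- The diagonal part `y - L` of `y` forms a `q⁻¹`-Weyl pair with `x`, so that `qSerre q x L = 0`;
the leading part of this relation is `qSerre q R L = 0`. -/
lemma qSerre_eq_zero (h : IsSplitDecomposition q d x y U) (hq : q ≠ 0) (hxy : qSerre q x y = 0)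
    (hRL : IsLadder R L U) (hx : ∀ n, ∀ u ∈ U n, x u = R u + q ^ (d - 2 * n) • u)
    (hy : ∀ n, ∀ u ∈ U n, y u = L u + q ^ (2 * n - d) • u) : qSerre q R L = 0 := by
  have hK : ∀ n, ∀ u ∈ U n, (y - L) u = q ^ (2 * n - d) • u := fun n u hu ↦ by
    rw [LinearMap.sub_apply, hy n u hu, add_sub_cancel_left]
  have hweyl : q⁻¹ • (x * (y - L)) - q⁻¹⁻¹ • ((y - L) * x) = (q⁻¹ - q) • 1 := by
    refine ext_of_iSup_eq_top h.iSup_eq_top fun n u hu ↦ ?_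
    have e₁ : q * q ^ (2 * (n - 1) - d) = q⁻¹ * q ^ (2 * n - d) := by
      rw [← zpow_one_add₀ hq, ← zpow_neg_one, ← zpow_add₀ hq]
      ring_nf
    have e₂ : q ^ (d - 2 * n) * q ^ (2 * n - d) = 1 := by
      rw [← zpow_add₀ hq, sub_add_sub_cancel, sub_self, zpow_zero]
    simp only [LinearMap.sub_apply (q⁻¹ • _), LinearMap.smul_apply, Module.End.mul_apply,
      Module.End.one_apply, inv_inv]
    rw [hK n u hu, map_smul, hx n u hu, map_add, map_smul, hK n u hu, hK _ _ (hRL.lower hu)]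
    simp only [smul_add, smul_smul, e₁, e₂, mul_comm (q ^ (2 * n - d)), mul_one, sub_smul]
    abel
  have hxL : qSerre q x L = 0 := by
    have := qSerre_eq_zero_of_weyl (inv_ne_zero hq) hweyl
    rwa [qSerre_inv, qSerre_sub, hxy, zero_sub, neg_eq_zero] at this
  have hlead : HasLeadingPart U (-1) x R := fun n u hu ↦ by
    rw [LinearMap.sub_apply, hx n u hu, add_sub_cancel_left]
    exact ⟨hRL.lower hu, mem_biSup_gt (by lia) (Submodule.smul_mem _ _ hu)⟩
  have hserre := hlead.qSerre (q := q) (.of_mem hRL.raise)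
  rw [hxL] at hserre
  exact hserre.eq_zero h.iSupIndep h.iSup_eq_top

lemma exists_isSerreLadder (h : IsSplitDecomposition q d x y U) (hq : q ≠ 0)
    (hU : ∀ n < 0, U n = ⊥) (hxy : qSerre q x y = 0) (hyx : qSerre q y x = 0) :
    ∃ R L, IsSerreLadder q R L U ∧ (∀ n, ∀ u ∈ U n, x u = R u + q ^ (d - 2 * n) • u) ∧
      ∀ n, ∀ u ∈ U n, y u = L u + q ^ (2 * n - d) • u := by
  obtain ⟨D, hD⟩ := exists_forall_apply_eq_smul h.iSupIndep h.iSup_eq_top fun n ↦ q ^ (d - 2 * n)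
  obtain ⟨E, hE⟩ := exists_forall_apply_eq_smul h.iSupIndep h.iSup_eq_top fun n ↦ q ^ (2 * n - d)
  have hx : ∀ n, ∀ u ∈ U n, x u = (x - D) u + q ^ (d - 2 * n) • u := fun n u hu ↦ by
    rw [LinearMap.sub_apply, hD n u hu, sub_add_cancel]
  have hy : ∀ n, ∀ u ∈ U n, y u = (y - E) u + q ^ (2 * n - d) • u := fun n u hu ↦ by
    rw [LinearMap.sub_apply, hE n u hu, sub_add_cancel]
  have hladder : IsLadder (x - D) (y - E) U :=
    { lower := fun n u hu ↦ by rw [LinearMap.sub_apply, hD n u hu]; exact h.lower hu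
      raise := fun n u hu ↦ by rw [LinearMap.sub_apply, hE n u hu]; exact h.raise hu }
  refine ⟨x - D, y - E, { hladder with
    eq_bot := hU
    serre_lower := h.qSerre_eq_zero hq hxy hladder hx hy
    serre_raise := h.swap.qSerre_eq_zero hq hyx hladder.swap (fun n u hu ↦ ?_) fun n u hu ↦ ?_ },
    hx, hy⟩
  · rw [hy _ u hu]
    ring_nf
  · rw [hx _ u hu]
    ring_nf

end IsSplitDecomposition

end SplitDecomposition

/-! ### Diagonalizable operators with eigenvalues `q ^ (d - 2 * n)` -/

section QDiagonalizable

variable {K M M' : Type*} [Field K] [AddCommGroup M] [Module K M] [AddCommGroup M'] [Module K M']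
  {q : K} {d m n : ℤ} {f : Module.End K M} {S T : Set ℤ} {v : M}

/-- The eigenspace for the `n`-th member of the standard sequence `q ^ d, q ^ (d - 2), …`. -/
def qEigenspace (q : K) (d : ℤ) (f : Module.End K M) (n : ℤ) : Submodule K M :=
  f.eigenspace (q ^ (d - 2 * n))

/-- The sum of the eigenspaces of `f` whose index, in the standard sequence, lies in `S`. -/
def qEigensum (q : K) (d : ℤ) (f : Module.End K M) (S : Set ℤ) : Submodule K M :=
  ⨆ n ∈ S, qEigenspace q d f n

/-- `f` is diagonalizable with all eigenvalues among `q ^ d, q ^ (d - 2), …, q ^ (-d)`. -/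
def IsQDiagonalizable (q : K) (d : ℤ) (f : Module.End K M) : Prop :=
  qEigensum q d f (Set.Icc 0 d) = ⊤

lemma mem_qEigenspace : v ∈ qEigenspace q d f n ↔ f v = q ^ (d - 2 * n) • v :=
  Module.End.mem_eigenspace_iff

lemma qEigenspace_inv : qEigenspace q⁻¹ d f n = qEigenspace q d f (d - n) := by
  rw [qEigenspace, qEigenspace, inv_zpow']
  ring_nf

lemma qEigenspace_le_qEigensum (hn : n ∈ S) : qEigenspace q d f n ≤ qEigensum q d f S :=
  le_biSup _ hn

lemma qEigensum_mono (hST : S ⊆ T) : qEigensum q d f S ≤ qEigensum q d f T :=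
  biSup_mono hST

lemma qEigensum_inv : qEigensum q⁻¹ d f S = qEigensum q d f ((d - ·) ⁻¹' S) := by
  simp only [qEigensum, qEigenspace_inv]
  refine ((Equiv.subLeft d).iSup_comp
    (g := fun n ↦ ⨆ _ : n ∈ S, qEigenspace q d f (d - n))).symm.trans ?_
  simp only [Equiv.subLeft_apply, sub_sub_cancel, Set.mem_preimage]

lemma qEigensum_mem_invtSubmodule (S : Set ℤ) : qEigensum q d f S ∈ f.invtSubmodule := by
  rw [Module.End.mem_invtSubmodule]
  refine iSup₂_le fun n hn v hv ↦ ?_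
  rw [Submodule.mem_comap, mem_qEigenspace.mp hv]
  exact Submodule.smul_mem _ _ (qEigenspace_le_qEigensum hn hv)

lemma apply_sub_smul_mem_qEigensum (hST : ∀ n ∈ S, n ≠ m → n ∈ T) (hv : v ∈ qEigensum q d f S) :
    f v - q ^ (d - 2 * m) • v ∈ qEigensum q d f T := by
  have hle : qEigensum q d f S ≤
      (qEigensum q d f T).comap (f - q ^ (d - 2 * m) • (1 : Module.End K M)) := by
    refine iSup₂_le fun n hn u hu ↦ ?_
    rw [Submodule.mem_comap, LinearMap.sub_apply, mem_qEigenspace.mp hu, LinearMap.smul_apply,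
      Module.End.one_apply, ← sub_smul]
    obtain rfl | hnm := eq_or_ne n m
    · rw [sub_self, zero_smul]
      exact zero_mem _
    · exact Submodule.smul_mem _ _ (qEigenspace_le_qEigensum (hST n hn hnm) hu)
  exact hle hv

lemma apply_mem_qEigensum {g : Module.End K M} {c : ℤ → K} {e : ℤ}
    (hg : ∀ ⦃n u⦄, u ∈ qEigenspace q d f n → g u - c n • u ∈ qEigenspace q d f (n + e))
    (hST : ∀ n ∈ S, n ∈ T ∧ n + e ∈ T) (hv : v ∈ qEigensum q d f S) : g v ∈ qEigensum q d f T := by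
  have hle : qEigensum q d f S ≤ (qEigensum q d f T).comap g := by
    refine iSup₂_le fun n hn u hu ↦ ?_
    have hu' := Submodule.smul_mem _ (c n) (qEigenspace_le_qEigensum (hST n hn).1 hu)
    exact (Submodule.sub_mem_iff_left _ hu').mp (qEigenspace_le_qEigensum (hST n hn).2 (hg hu))
  exact hle hv

lemma disjoint_qEigensum (hq : Function.Injective fun n : ℤ ↦ q ^ n) (hST : Disjoint S T) :
    Disjoint (qEigensum q d f S) (qEigensum q d f T) := by
  have hinj : Function.Injective fun n ↦ q ^ (d - 2 * n) := fun a b hab ↦ by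
    have := hq hab
    lia
  exact (f.eigenspaces_iSupIndep.comp hinj).disjoint_biSup_biSup hST

lemma mem_qEigenspace_of_mem_qEigensum (hq : Function.Injective fun n : ℤ ↦ q ^ n)
    (h₁ : v ∈ qEigensum q d f (Set.Iic n)) (h₂ : v ∈ qEigensum q d f (Set.Ici n)) :
    v ∈ qEigenspace q d f n := by
  have hlt := apply_sub_smul_mem_qEigensum (m := n) (T := Set.Iio n) (fun _ ↦ lt_of_le_of_ne) h₁
  have hgt := apply_sub_smul_mem_qEigensum (m := n) (T := Set.Ioi n)
    (fun _ hk hkn ↦ lt_of_le_of_ne hk hkn.symm) h₂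
  have hdisj := disjoint_qEigensum hq (d := d) (f := f)
    (Set.disjoint_left.mpr fun k (hk : k < n) ↦ not_lt_of_gt hk : Disjoint (Set.Iio n) (Set.Ioi n))
  exact mem_qEigenspace.mpr (sub_eq_zero.mp (Submodule.disjoint_def.mp hdisj _ hlt hgt))

namespace IsQDiagonalizable

lemma inv (h : IsQDiagonalizable q d f) : IsQDiagonalizable q⁻¹ d f := by
  rw [IsQDiagonalizable, qEigensum_inv, ← h]
  congr 1
  ext n
  simp only [Set.mem_preimage, Set.mem_Icc]
  lia

lemma prodMap (h : IsQDiagonalizable q d f) {g : Module.End K M'} (hg : IsQDiagonalizable q d g) :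
    IsQDiagonalizable q d (f.prodMap g) := by
  rw [IsQDiagonalizable, eq_top_iff, ← LinearMap.sup_range_inl_inr, LinearMap.range_eq_map,
    LinearMap.range_eq_map, ← h, ← hg]
  refine sup_le (Submodule.map_le_iff_le_comap.mpr ?_) (Submodule.map_le_iff_le_comap.mpr ?_)
  all_goals
    exact iSup₂_le fun n hn v hv ↦ qEigenspace_le_qEigensum hn
      (mem_qEigenspace.mpr (by simp [mem_qEigenspace.mp hv]))

lemma qEigensum_eq_top (h : IsQDiagonalizable q d f) (hS : Set.Icc 0 d ⊆ S) :
    qEigensum q d f S = ⊤ :=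
  top_le_iff.mp (h.ge.trans (qEigensum_mono hS))

lemma qEigensum_eq_bot (h : IsQDiagonalizable q d f) (hq : Function.Injective fun n : ℤ ↦ q ^ n)
    (hS : Disjoint S (Set.Icc 0 d)) : qEigensum q d f S = ⊥ := by
  have := disjoint_qEigensum hq (f := f) (d := d) hS
  rwa [h, disjoint_top] at this

lemma qEigensum_sup_compl (h : IsQDiagonalizable q d f) (S : Set ℤ) :
    qEigensum q d f S ⊔ qEigensum q d f Sᶜ = ⊤ := by
  rw [qEigensum, qEigensum, ← iSup_union, Set.union_compl_self]
  exact h.qEigensum_eq_top (Set.subset_univ _)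

lemma mem_of_apply_sub_smul_mem (h : IsQDiagonalizable q d f)
    (hq : Function.Injective fun n : ℤ ↦ q ^ n) (hm : m ∈ S)
    (hv : f v - q ^ (d - 2 * m) • v ∈ qEigensum q d f S) : v ∈ qEigensum q d f S := by
  obtain ⟨a, ha, b, hb, rfl⟩ : ∃ a ∈ qEigensum q d f S, ∃ b ∈ qEigensum q d f Sᶜ, a + b = v :=
    Submodule.mem_sup.mp (h.qEigensum_sup_compl S ▸ Submodule.mem_top)
  have hdisj := Submodule.disjoint_def.mp
    (disjoint_qEigensum hq (d := d) (f := f) (disjoint_compl_right (a := S)))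
  have hshift {T : Set ℤ} {w : M} (hw : w ∈ qEigensum q d f T) :
      f w - q ^ (d - 2 * m) • w ∈ qEigensum q d f T :=
    sub_mem (qEigensum_mem_invtSubmodule T hw) (Submodule.smul_mem _ _ hw)
  rw [map_add, smul_add, add_sub_add_comm] at hv
  have hbS := (Submodule.add_mem_iff_right _ (hshift ha)).mp hv
  have hbm : b ∈ qEigenspace q d f m :=
    mem_qEigenspace.mpr (sub_eq_zero.mp (hdisj _ hbS (hshift hb)))
  exact add_mem ha (qEigenspace_le_qEigensum hm hbm)

lemma exists_eq_zpow (h : IsQDiagonalizable q d f) {μ : K} (hμ : f.eigenspace μ ≠ ⊥) :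
    ∃ n : ℤ, μ = q ^ (d - 2 * n) := by
  by_contra! hne
  have hle : qEigensum q d f (Set.Icc 0 d) ≤ ⨆ ν ≠ μ, f.eigenspace ν :=
    iSup₂_le fun n _ ↦ le_biSup f.eigenspace (hne n).symm
  have hdisj := (f.eigenspaces_iSupIndep μ).mono_right hle
  rw [h, disjoint_top] at hdisj
  exact hμ hdisj

lemma inf_qEigensum_sup_inf_compl [FiniteDimensional K M] (h : IsQDiagonalizable q d f)
    {W : Submodule K M} (hW : W ∈ f.invtSubmodule) (S : Set ℤ) :
    W ⊓ qEigensum q d f S ⊔ W ⊓ qEigensum q d f Sᶜ = W := by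
  refine le_antisymm (sup_le inf_le_left inf_le_left) ?_
  have htop : ⨆ μ, f.genEigenspace μ 1 = ⊤ :=
    top_le_iff.mp (h.ge.trans (iSup₂_le fun n _ ↦ le_iSup (fun μ ↦ f.genEigenspace μ 1) _))
  refine (Submodule.eq_iSup_inf_genEigenspace 1 hW htop).le.trans (iSup_le fun μ ↦ ?_)
  by_cases hμ : f.eigenspace μ = ⊥
  · rw [show f.genEigenspace μ 1 = ⊥ from hμ, inf_bot_eq]
    exact bot_le
  obtain ⟨n, rfl⟩ := h.exists_eq_zpow hμ
  by_cases hn : n ∈ S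
  · exact le_sup_of_le_left (inf_le_inf_left _ (qEigenspace_le_qEigensum hn))
  · exact le_sup_of_le_right (inf_le_inf_left _ (qEigenspace_le_qEigensum (S := Sᶜ) hn))

lemma mem_invtSubmodule_of_le (h : IsQDiagonalizable q d f)
    (hq : Function.Injective fun n : ℤ ↦ q ^ n) {W : Submodule K M}
    (hW : ∀ m, W ≤ W ⊓ qEigensum q d f (Set.Iic m) ⊔ W ⊓ qEigensum q d f (Set.Iic m)ᶜ) :
    W ∈ f.invtSubmodule := by
  have key (m : ℤ) (hm : -1 ≤ m) : ∀ w ∈ W, w ∈ qEigensum q d f (Set.Iic m) → f w ∈ W := by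
    induction m, hm using Int.leInduction with
    | base =>
      intro w _ hw
      rw [h.qEigensum_eq_bot hq (Set.disjoint_left.mpr fun n hn hn' ↦ by
        simp only [Set.mem_Iic, Set.mem_Icc] at hn hn'; lia), Submodule.mem_bot] at hw
      rw [hw, map_zero]
      exact zero_mem W
    | succ m _ ih =>
      intro w hwW hw
      obtain ⟨a, ha, b, hb, rfl⟩ := Submodule.mem_sup.mp (hW m hwW)
      have ha' : a ∈ qEigensum q d f (Set.Iic (m + 1)) :=
        qEigensum_mono (Set.Iic_subset_Iic.mpr (by lia)) ha.2
      have hb' : b ∈ qEigensum q d f (Set.Ici (m + 1)) :=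
        qEigensum_mono (fun n hn ↦ by simpa using hn) hb.2
      have hbm := mem_qEigenspace_of_mem_qEigensum hq
        ((Submodule.add_mem_iff_right _ ha').mp hw) hb'
      rw [map_add, mem_qEigenspace.mp hbm]
      exact add_mem (ih a ha.1 ha.2) (Submodule.smul_mem _ _ hb.1)
  intro w hw
  refine key (max d (-1)) (le_max_right _ _) w hw ?_
  rw [h.qEigensum_eq_top fun n hn ↦ Set.mem_Iic.mpr (le_max_of_le_left hn.2)]
  exact Submodule.mem_top

end IsQDiagonalizable

end QDiagonalizable

/-! ### Weyl pairs -/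

section WeylPair

variable {K M M' : Type*} [Field K] [AddCommGroup M] [Module K M] [AddCommGroup M'] [Module K M']
  {q : K} {d n : ℤ} {A B : Module.End K M} {v : M}

/-- The `q`-Weyl relation between adjacent generators of `□_q`. -/
def IsWeylPair (q : K) (A B : Module.End K M) : Prop :=
  q • (A * B) - q⁻¹ • (B * A) = (q - q⁻¹) • 1

namespace IsWeylPair

lemma inv (h : IsWeylPair q A B) : IsWeylPair q⁻¹ B A := by
  rw [IsWeylPair, inv_inv, ← neg_sub, h, ← neg_smul, neg_sub]

lemma prodMap (h : IsWeylPair q A B) {A' B' : Module.End K M'} (h' : IsWeylPair q A' B') :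
    IsWeylPair q (A.prodMap A') (B.prodMap B') :=
  LinearMap.ext fun v ↦ Prod.ext (LinearMap.congr_fun h v.1) (LinearMap.congr_fun h' v.2)

lemma raise (h : IsWeylPair q A B) (hq : q ≠ 0) (hv : v ∈ qEigenspace q d A n) :
    B v - q ^ (2 * n - d) • v ∈ qEigenspace q d A (n + 1) := by
  have hAv := mem_qEigenspace.mp hv
  have hrel := LinearMap.congr_fun h v
  simp only [LinearMap.sub_apply, LinearMap.smul_apply, Module.End.mul_apply,
    Module.End.one_apply, hAv, map_smul] at hrel
  have e₁ : q ^ (d - 2 * (n + 1)) = q⁻¹ * (q⁻¹ * q ^ (d - 2 * n)) := by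
    rw [← zpow_neg_one, ← zpow_add₀ hq, ← zpow_add₀ hq]
    ring_nf
  have e₂ : q ^ (2 * n - d) * q ^ (d - 2 * n) = 1 := by
    rw [← zpow_add₀ hq, sub_add_sub_cancel, sub_self, zpow_zero]
  have hABv : A (B v) = q⁻¹ • (q⁻¹ • q ^ (d - 2 * n) • B v + (q - q⁻¹) • v) := by
    rw [← hrel, add_sub_cancel, inv_smul_smul₀ hq]
  rw [mem_qEigenspace, map_sub, map_smul, hAv, hABv, e₁, smul_smul (q ^ (2 * n - d)), e₂]
  match_scalars
  · ring
  · field_simp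
    linear_combination e₂

lemma lower (h : IsWeylPair q A B) (hq : q ≠ 0) (hv : v ∈ qEigenspace q d B n) :
    A v - q ^ (2 * n - d) • v ∈ qEigenspace q d B (n - 1) := by
  have := h.inv.raise (d := d) (n := d - n) (v := v) (inv_ne_zero hq)
    (by rwa [qEigenspace_inv, sub_sub_cancel])
  rw [qEigenspace_inv, inv_zpow'] at this
  rwa [show -(2 * (d - n) - d) = 2 * n - d by ring, show d - (d - n + 1) = n - 1 by ring] at this

lemma qEigensum_Iic_le (h : IsWeylPair q A B) (hq : Function.Injective fun n : ℤ ↦ q ^ n)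
    (hA : IsQDiagonalizable q d A) (hB : IsQDiagonalizable q d B) (m : ℤ) :
    qEigensum q d B (Set.Iic m) ≤ qEigensum q d A (Set.Ici (d - m)) := by
  have hneg {n : ℤ} (hn : n < 0) : qEigenspace q d B n = ⊥ := by
    rw [← le_bot_iff, ← hB.qEigensum_eq_bot hq (S := {n}) (by simp [hn])]
    exact qEigenspace_le_qEigensum rfl
  have key (n : ℤ) (hn : -1 ≤ n) : qEigenspace q d B n ≤ qEigensum q d A (Set.Ici (d - n)) := by
    induction n, hn using Int.leInduction with
    | base => exact (hneg (by simp)).trans_le bot_le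
    | succ n _ ih =>
      intro v hv
      have hlow := h.lower (ne_zero_of_zpow_injective hq) hv
      rw [add_sub_cancel_right] at hlow
      refine hA.mem_of_apply_sub_smul_mem hq (m := d - (n + 1)) Set.self_mem_Ici ?_
      rw [show d - 2 * (d - (n + 1)) = 2 * (n + 1) - d by ring]
      exact qEigensum_mono (Set.Ici_subset_Ici.mpr (by lia)) (ih hlow)
  refine iSup₂_le fun n hn ↦ ?_
  obtain hn₀ | hn₀ := lt_or_ge n 0
  · exact (hneg hn₀).trans_le bot_le
  · exact (key n (by lia)).trans
      (qEigensum_mono (Set.Ici_subset_Ici.mpr (sub_le_sub_left (Set.mem_Iic.mp hn) d)))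

lemma qEigensum_Iic_eq (h : IsWeylPair q A B) (hq : Function.Injective fun n : ℤ ↦ q ^ n)
    (hA : IsQDiagonalizable q d A) (hB : IsQDiagonalizable q d B) (m : ℤ) :
    qEigensum q d B (Set.Iic m) = qEigensum q d A (Set.Ici (d - m)) := by
  refine (h.qEigensum_Iic_le hq hA hB m).antisymm ?_
  have hq' : Function.Injective fun n : ℤ ↦ q⁻¹ ^ n := fun a b hab ↦ by
    simpa using @hq (-a) (-b) (by simpa using hab)
  simpa [qEigensum_inv] using h.inv.qEigensum_Iic_le hq' hB.inv hA.inv m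

end IsWeylPair

end WeylPair

/-! ### Flags -/

section WeylCycle

variable {K M M' : Type*} [Field K] [AddCommGroup M] [Module K M] [AddCommGroup M'] [Module K M']
  {q : K} {d m n : ℤ} {i j k : ZMod 4} {x : ZMod 4 → Module.End K M} {v : M}

/-- The operators by which the generators of `□_q` act on a module of type `1` and diameter `d`,
without the cubic relations. -/
structure IsWeylCycle (q : K) (d : ℤ) (x : ZMod 4 → Module.End K M) : Prop where
  isWeylPair : ∀ i, IsWeylPair q (x i) (x (i + 1))
  isQDiagonalizable : ∀ i, IsQDiagonalizable q d (x i)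

/-- The `m`-th step of the flag attached to the vertex `i` of the square: the sum of the first
`m + 1` eigenspaces of `x i`, or equivalently of the last `m + 1` eigenspaces of `x (i - 1)`. -/
def flag (q : K) (d : ℤ) (x : ZMod 4 → Module.End K M) (i : ZMod 4) (m : ℤ) : Submodule K M :=
  qEigensum q d (x i) (Set.Iic m)

lemma flag_mono (q : K) (d : ℤ) (x : ZMod 4 → Module.End K M) (i : ZMod 4) :
    Monotone (flag q d x i) :=
  fun _ _ hmn ↦ qEigensum_mono (Set.Iic_subset_Iic.mpr hmn)

lemma apply_sub_smul_mem_flag (hv : v ∈ flag q d x i m) :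
    x i v - q ^ (d - 2 * m) • v ∈ flag q d x i (m - 1) :=
  apply_sub_smul_mem_qEigensum (fun _ hn hnm ↦ Int.le_sub_one_of_lt (lt_of_le_of_ne hn hnm)) hv

lemma finrank_inf_add_finrank_inf [FiniteDimensional K M] {A B : Submodule K M}
    (hAB : Disjoint A B) (W : Submodule K M) :
    Module.finrank K ↥(W ⊓ A) + Module.finrank K ↥(W ⊓ B) =
      Module.finrank K ↥(W ⊓ A ⊔ W ⊓ B) := by
  rw [← Submodule.finrank_sup_add_finrank_inf_eq,
    (hAB.mono inf_le_right inf_le_right).eq_bot, finrank_bot, add_zero]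

namespace IsWeylCycle

lemma prodMap (h : IsWeylCycle q d x) {x' : ZMod 4 → Module.End K M'} (h' : IsWeylCycle q d x') :
    IsWeylCycle q d fun i ↦ (x i).prodMap (x' i) where
  isWeylPair i := (h.isWeylPair i).prodMap (h'.isWeylPair i)
  isQDiagonalizable i := (h.isQDiagonalizable i).prodMap (h'.isQDiagonalizable i)

lemma comp_add (h : IsWeylCycle q d x) (k : ZMod 4) : IsWeylCycle q d fun i ↦ x (i + k) where
  isWeylPair i := by simpa only [add_right_comm i 1 k] using h.isWeylPair (i + k)
  isQDiagonalizable i := h.isQDiagonalizable (i + k)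

variable (h : IsWeylCycle q d x) (hq : Function.Injective fun n : ℤ ↦ q ^ n)
include h hq

lemma flag_eq_bot (hm : m < 0) : flag q d x i m = ⊥ :=
  (h.isQDiagonalizable i).qEigensum_eq_bot hq (Set.disjoint_left.mpr fun _ hn hn' ↦
    not_lt_of_ge (hn'.1.trans hn) hm)

lemma flag_zero : flag q d x i 0 = qEigenspace q d (x i) 0 := by
  refine le_antisymm (fun v hv ↦ ?_) (qEigenspace_le_qEigensum Set.self_mem_Iic)
  have hlow := apply_sub_smul_mem_flag hv
  rw [h.flag_eq_bot hq (by simp), Submodule.mem_bot] at hlow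
  exact mem_qEigenspace.mpr (sub_eq_zero.mp hlow)

lemma flag_succ (hij : i + 1 = j) (m : ℤ) :
    flag q d x j m = qEigensum q d (x i) (Set.Ici (d - m)) := by
  obtain rfl := hij
  exact (h.isWeylPair i).qEigensum_Iic_eq hq (h.isQDiagonalizable i) (h.isQDiagonalizable _) m

lemma flag_succ_eq_compl (hij : i + 1 = j) (m : ℤ) :
    flag q d x j (d - 1 - m) = qEigensum q d (x i) (Set.Iic m)ᶜ := by
  rw [h.flag_succ hq hij, Set.compl_Iic]
  congr 1
  ext n
  simp only [Set.mem_Ici, Set.mem_Ioi]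
  lia

lemma disjoint_flag (hij : i + 1 = j) (hmn : m + n < d) :
    Disjoint (flag q d x i m) (flag q d x j n) := by
  rw [h.flag_succ hq hij]
  refine disjoint_qEigensum hq (Set.disjoint_left.mpr fun k hk hk' ↦ ?_)
  simp only [Set.mem_Iic, Set.mem_Ici] at hk hk'
  lia

lemma apply_mem_flag (hij : j = i + 1 ∨ j = i + 2) (hv : v ∈ flag q d x i m) :
    x j v ∈ flag q d x i (m + 1) := by
  have hq₀ := ne_zero_of_zpow_injective hq
  obtain rfl | rfl := hij
  · refine apply_mem_qEigensum (fun _ _ ↦ (h.isWeylPair i).raise hq₀)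
      (fun n (hn : n ≤ m) ↦ ?_) hv
    simp only [Set.mem_Iic]
    lia
  · have hi : i + 2 + 1 + 1 = i := by grind
    rw [h.flag_succ hq hi] at hv ⊢
    refine apply_mem_qEigensum (fun _ _ ↦ (h.isWeylPair (i + 2)).lower hq₀)
      (fun n (hn : d - m ≤ n) ↦ ?_) hv
    simp only [Set.mem_Ici]
    lia

lemma exists_apply_sub_smul_mem_flag (hij : j = i ∨ j + 1 = i) :
    ∃ μ : ℤ → K, ∀ m, ∀ v ∈ flag q d x i m, x j v - μ m • v ∈ flag q d x i (m - 1) := by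
  obtain rfl | hij := hij
  · exact ⟨fun m ↦ q ^ (d - 2 * m), fun m v ↦ apply_sub_smul_mem_flag⟩
  · refine ⟨fun m ↦ q ^ (d - 2 * (d - m)), fun m v hv ↦ ?_⟩
    rw [h.flag_succ hq hij] at hv ⊢
    refine apply_sub_smul_mem_qEigensum (fun n (hn : d - m ≤ n) hnm ↦ Set.mem_Ici.mpr ?_) hv
    lia

variable [FiniteDimensional K M] {W : Submodule K M}

lemma finrank_inf_flag_add_eq (hij : i + 1 = j) (hW : W ∈ (x i).invtSubmodule) (m : ℤ) :
    Module.finrank K ↥(W ⊓ flag q d x i m) + Module.finrank K ↥(W ⊓ flag q d x j (d - 1 - m)) =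
      Module.finrank K W := by
  rw [finrank_inf_add_finrank_inf (h.disjoint_flag hq hij (by lia)), h.flag_succ_eq_compl hq hij,
    flag, (h.isQDiagonalizable i).inf_qEigensum_sup_inf_compl hW]

/- The dimensions of the intersections of `W` with complementary steps of the flags at `j` and
`j + 1` have sum at most `dim W`, with equality for all steps if and only if `W` is invariant
under `x j`. Equality holds for `j = i` and `j = i + 2`, which forces it for `j = i + 1`. -/
lemma mem_invtSubmodule_succ (hij : i + 1 = j) (hjk : j + 1 = k) (hi : W ∈ (x i).invtSubmodule)
    (hk : W ∈ (x k).invtSubmodule) : W ∈ (x j).invtSubmodule := by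
  refine (h.isQDiagonalizable j).mem_invtSubmodule_of_le hq fun m ↦ ?_
  rw [← h.flag_succ_eq_compl hq hjk]
  change W ≤ W ⊓ flag q d x j m ⊔ W ⊓ flag q d x k (d - 1 - m)
  have hli : k + 1 + 1 = i := by grind
  have hi_eq := h.finrank_inf_flag_add_eq hq hij hi (d - 1 - m)
  have hk_eq := h.finrank_inf_flag_add_eq hq rfl hk (d - 1 - m)
  have hl := h.disjoint_flag hq hli (m := m) (n := d - 1 - m) (by lia)
  have hl_le := (finrank_inf_add_finrank_inf hl W).trans_le
    (Submodule.finrank_mono (sup_le inf_le_left inf_le_left))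
  have hj := finrank_inf_add_finrank_inf (h.disjoint_flag hq hjk (m := m) (n := d - 1 - m)
    (by lia)) W
  rw [sub_sub_cancel] at hi_eq hk_eq
  refine (Submodule.eq_of_le_of_finrank_le (sup_le inf_le_left inf_le_left) ?_).ge
  lia

end IsWeylCycle

end WeylCycle

/-! ### Irreducible modules -/

section Irreducible

variable {K M M' : Type*} [Field K] [AddCommGroup M] [Module K M] [AddCommGroup M'] [Module K M']

/-- The family `f` of operators has no common invariant subspaces apart from `⊥` and `⊤`. -/
def IsIrreducibleFamily {ι : Type*} (f : ι → Module.End K M) : Prop :=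
  ∀ W : Submodule K M, (∀ i, W ∈ (f i).invtSubmodule) → W = ⊥ ∨ W = ⊤

lemma IsIrreducibleFamily.surjective {ι : Type*} {f : ι → Module.End K M}
    (hf : IsIrreducibleFamily f) {g : M' →ₗ[K] M} (hg : ∀ i, g.range ∈ (f i).invtSubmodule)
    (hg₀ : g ≠ 0) : Function.Surjective g :=
  LinearMap.range_eq_top.mp ((hf _ hg).resolve_left (LinearMap.range_eq_bot.not.mpr hg₀))

lemma IsIrreducibleFamily.exists_intertwining_equiv {ι : Type*} {f : ι → Module.End K M}
    {f' : ι → Module.End K M'} (hf : IsIrreducibleFamily f) (hf' : IsIrreducibleFamily f')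
    {N : Submodule K (M × M')}
    (hN : ∀ i, N ∈ Module.End.invtSubmodule ((f i).prodMap (f' i))) (hN₀ : N ≠ ⊥)
    (hleft : N.comap (LinearMap.inl K M M') ≠ ⊤) (hright : N.comap (LinearMap.inr K M M') ≠ ⊤) :
    ∃ σ : M ≃ₗ[K] M', ∀ i v, σ (f i v) = f' i (σ v) := by
  have hinl : N.comap (LinearMap.inl K M M') = ⊥ :=
    (hf _ fun i v hv ↦ by simpa using hN i hv).resolve_right hleft
  have hinr : N.comap (LinearMap.inr K M M') = ⊥ :=
    (hf' _ fun i v hv ↦ by simpa using hN i hv).resolve_right hright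
  have hfst : ∀ n ∈ N, n.1 = 0 → n = 0 := by
    rintro ⟨_, w⟩ hn rfl
    exact Prod.ext rfl (hinr.le hn)
  have hsnd : ∀ n ∈ N, n.2 = 0 → n = 0 := by
    rintro ⟨v, _⟩ hn rfl
    exact Prod.ext (hinl.le hn) rfl
  obtain ⟨n, hn, hn₀⟩ := N.ne_bot_iff.mp hN₀
  let p₁ := LinearMap.fst K M M' ∘ₗ N.subtype
  let p₂ := LinearMap.snd K M M' ∘ₗ N.subtype
  have hp₁ : Function.Surjective p₁ := by
    refine hf.surjective (fun i ↦ ?_) fun h ↦ hn₀ (hfst n hn (LinearMap.congr_fun h ⟨n, hn⟩))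
    rintro _ ⟨n, rfl⟩
    exact ⟨⟨_, hN i n.2⟩, rfl⟩
  have hp₂ : Function.Surjective p₂ := by
    refine hf'.surjective (fun i ↦ ?_) fun h ↦ hn₀ (hsnd n hn (LinearMap.congr_fun h ⟨n, hn⟩))
    rintro _ ⟨n, rfl⟩
    exact ⟨⟨_, hN i n.2⟩, rfl⟩
  have hp₁' : Function.Injective p₁ :=
    (injective_iff_map_eq_zero p₁).mpr fun n hn ↦ Subtype.ext (hfst n n.2 hn)
  have hp₂' : Function.Injective p₂ :=
    (injective_iff_map_eq_zero p₂).mpr fun n hn ↦ Subtype.ext (hsnd n n.2 hn)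
  obtain ⟨σ, hσ⟩ := Submodule.exists_equiv_eq_graph (G := N) ⟨hp₁', hp₁⟩ ⟨hp₂', hp₂⟩
  have hmem {v w} : (v, w) ∈ N ↔ w = σ v := by rw [hσ]; rfl
  exact ⟨σ, fun i v ↦ (hmem.mp (hN i (hmem.mpr rfl))).symm⟩

lemma iSup_inf_mem_invtSubmodule {f : Module.End K M} {A B : ℤ → Submodule K M} (hA : Monotone A)
    (hup : ∀ m, ∀ v ∈ A m, f v ∈ A (m + 1)) {μ : ℤ → K}
    (hlow : ∀ m, ∀ v ∈ B m, f v - μ m • v ∈ B (m - 1)) (c : ℤ) :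
    (⨆ m, A m ⊓ B (c - m)) ∈ f.invtSubmodule := by
  rw [Module.End.mem_invtSubmodule]
  refine iSup_le fun m v ⟨hvA, hvB⟩ ↦ ?_
  have hmem : f v - μ (c - m) • v ∈ A (m + 1) ⊓ B (c - (m + 1)) :=
    ⟨sub_mem (hup m v hvA) (Submodule.smul_mem _ _ (hA (by lia) hvA)),
      by rw [← sub_sub]; exact hlow _ v hvB⟩
  rw [Submodule.mem_comap, ← sub_add_cancel (f v) (μ (c - m) • v)]
  exact add_mem (Submodule.mem_iSup_of_mem _ hmem)
    (Submodule.smul_mem _ _ (Submodule.mem_iSup_of_mem m ⟨hvA, hvB⟩))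

/-- The operators by which the generators of `□_q` act on an irreducible module of type `1` and
diameter `d`. -/
structure IsIrreducibleBoxModule (q : K) (d : ℤ) (x : ZMod 4 → Module.End K M) : Prop
    extends IsWeylCycle q d x where
  qSerre_eq_zero : ∀ i, qSerre q (x i) (x (i + 2)) = 0
  qEigenspace_zero_ne_bot : ∀ i, qEigenspace q d (x i) 0 ≠ ⊥
  isIrreducibleFamily : IsIrreducibleFamily x

/-- The `n`-th component of the split decomposition attached to the opposite vertices `i` and
`i + 2`. -/
def splitComponent (q : K) (d : ℤ) (x : ZMod 4 → Module.End K M) (i : ZMod 4) (n : ℤ) :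
    Submodule K M :=
  flag q d x i n ⊓ flag q d x (i + 2) (d - n)

variable {q : K} {d m n : ℤ} {x : ZMod 4 → Module.End K M}

lemma IsWeylCycle.iSup_flag_inf_flag_mem_invtSubmodule (h : IsWeylCycle q d x)
    (hq : Function.Injective fun n : ℤ ↦ q ^ n) (i j : ZMod 4) (c : ℤ) :
    (⨆ m, flag q d x i m ⊓ flag q d x (i + 2) (c - m)) ∈ (x j).invtSubmodule := by
  have hcases : (j = i + 1 ∨ j = i + 2) ∧ (j = i + 2 ∨ j + 1 = i + 2) ∨
      (j = i + 2 + 1 ∨ j = i + 2 + 2) ∧ (j = i ∨ j + 1 = i) := by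
    clear * -
    decide +revert
  obtain ⟨hup, hlow⟩ | ⟨hup, hlow⟩ := hcases
  · obtain ⟨μ, hμ⟩ := h.exists_apply_sub_smul_mem_flag hq hlow
    exact iSup_inf_mem_invtSubmodule (flag_mono q d x _) (fun m v ↦ h.apply_mem_flag hq hup) hμ c
  · obtain ⟨μ, hμ⟩ := h.exists_apply_sub_smul_mem_flag hq hlow
    rw [← (Equiv.subLeft c).iSup_comp]
    simpa only [Equiv.subLeft_apply, sub_sub_cancel, inf_comm (flag q d x i _)] using
      iSup_inf_mem_invtSubmodule (flag_mono q d x _) (fun m v ↦ h.apply_mem_flag hq hup) hμ c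

namespace IsIrreducibleBoxModule

variable (h : IsIrreducibleBoxModule q d x) (hq : Function.Injective fun n : ℤ ↦ q ^ n)
include h

lemma comp_add (k : ZMod 4) : IsIrreducibleBoxModule q d fun i ↦ x (i + k) where
  toIsWeylCycle := h.toIsWeylCycle.comp_add k
  qSerre_eq_zero i := by simpa only [add_right_comm i 2 k] using h.qSerre_eq_zero (i + k)
  qEigenspace_zero_ne_bot i := h.qEigenspace_zero_ne_bot (i + k)
  isIrreducibleFamily W hW :=
    h.isIrreducibleFamily W fun i ↦ by simpa only [sub_add_cancel] using hW (i - k)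

include hq

lemma flag_sub_one_ne_top (i : ZMod 4) : flag q d x i (d - 1) ≠ ⊤ := fun htop ↦ by
  have hdisj := h.disjoint_flag hq (i := i) rfl (m := d - 1) (n := 0) (by lia)
  rw [htop, top_disjoint, h.flag_zero hq] at hdisj
  exact h.qEigenspace_zero_ne_bot (i + 1) hdisj

/- The sum of all intersections of total degree `d - 1` is a submodule lying in a proper step of
a flag, hence zero. -/
lemma disjoint_flag_add_two (i : ZMod 4) (hmn : m + n < d) :
    Disjoint (flag q d x i m) (flag q d x (i + 2) n) := by
  have hbot : (⨆ m, flag q d x i m ⊓ flag q d x (i + 2) (d - 1 - m)) = ⊥ := by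
    refine (h.isIrreducibleFamily _ fun j ↦
      h.iSup_flag_inf_flag_mem_invtSubmodule hq i j _).resolve_right fun htop ↦
        h.flag_sub_one_ne_top hq (i + 2) (top_le_iff.mp (htop.ge.trans (iSup_le fun m ↦ ?_)))
    obtain hm | hm := lt_or_ge m 0
    · rw [h.flag_eq_bot hq hm, bot_inf_eq]
      exact bot_le
    · exact inf_le_right.trans (flag_mono q d x _ (by lia))
  rw [disjoint_iff, ← le_bot_iff, ← hbot]
  exact le_iSup_of_le m (inf_le_inf_left _ (flag_mono q d x _ (by lia)))

lemma splitComponent_zero (i : ZMod 4) : splitComponent q d x i 0 = qEigenspace q d (x i) 0 := by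
  have htop : flag q d x (i + 2) (d - 0) = ⊤ := by
    rw [sub_zero]
    exact (h.isQDiagonalizable _).qEigensum_eq_top fun _ hn ↦ hn.2
  rw [splitComponent, h.flag_zero hq, htop, inf_top_eq]

lemma iSupIndep_splitComponent (i : ZMod 4) : iSupIndep (splitComponent q d x i) := fun n ↦ by
  have hle : (⨆ j ≠ n, splitComponent q d x i j) ≤
      flag q d x i (n - 1) ⊔ flag q d x (i + 2) (d - n - 1) := by
    refine iSup₂_le fun j hj ↦ ?_
    obtain hlt | hgt := lt_or_gt_of_ne hj
    · exact le_sup_of_le_left (inf_le_left.trans (flag_mono q d x _ (by lia)))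
    · exact le_sup_of_le_right (inf_le_right.trans (flag_mono q d x _ (by lia)))
  refine Disjoint.mono_right hle (Submodule.disjoint_def.mpr fun v hv hv' ↦ ?_)
  obtain ⟨a, ha, b, hb, rfl⟩ := Submodule.mem_sup.mp hv'
  have hbn : b ∈ flag q d x i n :=
    (Submodule.add_mem_iff_right _ (flag_mono q d x i (by lia) ha)).mp hv.1
  obtain rfl : b = 0 := Submodule.disjoint_def.mp
    (h.disjoint_flag_add_two hq i (m := n) (n := d - n - 1) (by lia)) b hbn hb
  rw [add_zero] at hv ⊢
  exact Submodule.disjoint_def.mp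
    (h.disjoint_flag_add_two hq i (m := n - 1) (n := d - n) (by lia)) a ha hv.2

theorem isSplitDecomposition (i : ZMod 4) :
    IsSplitDecomposition q d (x i) (x (i + 2)) (splitComponent q d x i) where
  iSupIndep := h.iSupIndep_splitComponent hq i
  iSup_eq_top := by
    refine (h.isIrreducibleFamily _ fun j ↦
      h.iSup_flag_inf_flag_mem_invtSubmodule hq i j d).resolve_left fun hbot ↦ ?_
    have := (le_iSup (splitComponent q d x i) 0).trans_eq hbot
    rw [h.splitComponent_zero hq, le_bot_iff] at this
    exact h.qEigenspace_zero_ne_bot i this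
  lower n u hu := by
    have hup := h.apply_mem_flag hq (j := i) (Or.inr (by grind)) hu.2
    refine ⟨apply_sub_smul_mem_flag hu.1, sub_mem ?_ (Submodule.smul_mem _ _ ?_)⟩
    · rwa [← sub_add]
    · exact flag_mono q d x _ (by lia) hu.2
  raise n u hu := by
    have hlow := apply_sub_smul_mem_flag hu.2
    rw [show d - 2 * (d - n) = 2 * n - d by ring, sub_sub] at hlow
    exact ⟨sub_mem (h.apply_mem_flag hq (Or.inr rfl) hu.1)
      (Submodule.smul_mem _ _ (flag_mono q d x _ (by lia) hu.1)), hlow⟩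

end IsIrreducibleBoxModule

end Irreducible

/-! ### The flipped graph -/

section FlippedGraph

variable {K M M' : Type*} [Field K] [AddCommGroup M] [Module K M] [AddCommGroup M'] [Module K M']
  {q : K} {d : ℕ} {R L x y : Module.End K M} {U : ℤ → Submodule K M} {u v w : M}

lemma iSupIndep_prod {ι : Type*} {U : ι → Submodule K M} {U' : ι → Submodule K M'}
    (hU : iSupIndep U) (hU' : iSupIndep U') : iSupIndep fun n ↦ (U n).prod (U' n) := fun n ↦ by
  have hle : (⨆ j ≠ n, (U j).prod (U' j)) ≤ (⨆ j ≠ n, U j).prod (⨆ j ≠ n, U' j) :=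
    iSup₂_le fun j hj ↦ Submodule.prod_mono (le_biSup U hj) (le_biSup U' hj)
  refine Disjoint.mono_right hle (disjoint_iff.mpr ?_)
  rw [Submodule.prod_inf_prod, (hU n).eq_bot, (hU' n).eq_bot, Submodule.prod_bot]

/-- The submodule of `M × M` generated, under `(R, L)` and `(L, R)`, by the graph of `L ^ d` on the
bottom component. On a module of diameter `d` it turns out to be the graph of an isomorphism. -/
def flippedGraph (R L : Module.End K M) (U : ℤ → Submodule K M) (d : ℕ) : Submodule K (M × M) :=
  wordSpan (R.prodMap L) (L.prodMap R) ((U 0).map (LinearMap.id.prod (L ^ d)))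

lemma mem_flippedGraph (hu : u ∈ U 0) : (u, (L ^ d) u) ∈ flippedGraph R L U d :=
  le_wordSpan _ (Submodule.mem_map_of_mem hu)

namespace IsSerreLadder

variable (h : IsSerreLadder q R L U) (hd : ∀ n : ℤ, d < n → U n = ⊥)
include h

lemma map_le_prod : (U 0).map (LinearMap.id.prod (L ^ d)) ≤ (U 0).prod (U (d - 0)) :=
  Submodule.map_le_iff_le_comap.mpr fun u hu ↦
    ⟨hu, by rw [sub_zero, ← zero_add (d : ℤ)]; exact h.pow_raise d hu⟩

include hd

lemma eq_of_mem_flippedGraph (hq : Function.Injective fun n : ℤ ↦ q ^ n) (hU : iSupIndep U)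
    (hv : v ∈ U 0) (hw : w ∈ U d) (hmem : (v, w) ∈ flippedGraph R L U d) : w = (L ^ d) v := by
  have hpow (f g : Module.End K M) (a : ℕ) : f.prodMap g ^ a = (f ^ a).prodMap (g ^ a) :=
    (map_pow (LinearMap.prodMapRingHom K M M) (f, g) a).symm
  have hgraph : ∀ a, R.prodMap L ^ a * L.prodMap R ^ a ∈
      ((U 0).map (LinearMap.id.prod (L ^ d))).compatibleMaps
        ((U 0).map (LinearMap.id.prod (L ^ d))) := by
    rintro a _ ⟨u, hu, rfl⟩
    refine ⟨(R ^ a) ((L ^ a) u), ?_, ?_⟩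
    · simpa using h.pow_lower a (h.pow_raise a hu)
    · simpa [hpow] using (h.pow_raise_lower_raise hq hd a hu).symm
  obtain ⟨u, -, hu⟩ := (h.prod (h.reverse hd)).wordSpan_inf_le
    (iSupIndep_prod hU (hU.comp sub_right_injective)) hq h.map_le_prod hgraph
    ⟨hmem, hv, by rwa [sub_zero]⟩
  obtain ⟨rfl, rfl⟩ := Prod.mk.inj hu
  rfl

lemma flippedGraph_mem_invtSubmodule
    (hx : ∀ n, ∀ u ∈ U n, x u = R u + q ^ (d - 2 * n) • u)
    (hy : ∀ n, ∀ u ∈ U n, y u = L u + q ^ (2 * n - d) • u) :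
    flippedGraph R L U d ∈ Module.End.invtSubmodule (x.prodMap y) ∧
      flippedGraph R L U d ∈ Module.End.invtSubmodule (y.prodMap x) := by
  have hladder := (h.prod (h.reverse hd)).toIsLadder
  constructor
  · refine hladder.wordSpan_mem_invtSubmodule_of_apply_eq_add_smul h.map_le_prod
      (c := fun n ↦ q ^ (d - 2 * n)) (wordSpan_mem_invtSubmodule_lower _)
      fun n u ⟨hu₁, hu₂⟩ ↦ Prod.ext (hx n u.1 hu₁) ((hy _ u.2 hu₂).trans ?_)
    rw [show 2 * (d - n) - d = d - 2 * n by ring]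
    rfl
  · refine hladder.wordSpan_mem_invtSubmodule_of_apply_eq_add_smul h.map_le_prod
      (c := fun n ↦ q ^ (2 * n - d)) (wordSpan_mem_invtSubmodule_raise _)
      fun n u ⟨hu₁, hu₂⟩ ↦ Prod.ext (hy n u.1 hu₁) ((hx _ u.2 hu₂).trans ?_)
    rw [show d - 2 * (d - n) = 2 * n - d by ring]
    rfl

end IsSerreLadder

end FlippedGraph

/-! ### The isomorphism with the twisted module -/

section Isomorphism

variable {K M : Type*} [Field K] [AddCommGroup M] [Module K M] {q : K} {i : ZMod 4}
  {x : ZMod 4 → Module.End K M}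

namespace IsIrreducibleBoxModule

lemma splitComponent_eq_bot {d n : ℤ} (h : IsIrreducibleBoxModule q d x)
    (hq : Function.Injective fun n : ℤ ↦ q ^ n) (hn : n < 0 ∨ d < n) :
    splitComponent q d x i n = ⊥ := by
  obtain hn | hn := hn
  · rw [splitComponent, h.flag_eq_bot hq hn, bot_inf_eq]
  · rw [splitComponent, h.flag_eq_bot hq (m := d - n) (by lia), inf_bot_eq]

lemma eq_zero_of_pow_raise_eq_zero {d : ℤ} (h : IsIrreducibleBoxModule q d x)
    (hq : Function.Injective fun n : ℤ ↦ q ^ n) {R L : Module.End K M}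
    (hRL : IsLadder R L (splitComponent q d x i))
    (hL : ∀ n, ∀ u ∈ splitComponent q d x i n, x (i + 2) u = L u + q ^ (2 * n - d) • u) {n : ℕ}
    (hn : n ≤ d) {u : M} (hu : u ∈ splitComponent q d x i 0) (hLu : (L ^ n) u = 0) : u = 0 := by
  have key : (L ^ n) u ∈ qEigensum q d (x (i + 2)) (Set.Ici 1) →
      u ∈ qEigensum q d (x (i + 2)) (Set.Ici 1) := by
    clear hLu
    induction n with
    | zero => simp
    | succ n ih =>
      refine fun hmem ↦ ih (by lia) ((h.isQDiagonalizable _).mem_of_apply_sub_smul_mem hq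
        (m := d - n) (Set.mem_Ici.mpr (by lia)) ?_)
      rw [hL _ _ (hRL.pow_raise n hu), zero_add, show d - 2 * (d - (n : ℤ)) = 2 * n - d by ring,
        add_sub_cancel_right, ← Module.End.mul_apply, ← pow_succ']
      exact hmem
  have hflag : u ∈ flag q d x (i + 2 + 1) (d - 1) := by
    rw [h.flag_succ hq rfl, sub_sub_cancel]
    exact key (hLu ▸ zero_mem _)
  exact Submodule.disjoint_def.mp
    (h.disjoint_flag hq (by grind : i + 2 + 1 + 1 = i) (m := d - 1) (n := 0) (by lia)) u hflag hu.1

variable [FiniteDimensional K M] {d : ℕ}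

lemma flippedGraph_mem_invtSubmodule (h : IsIrreducibleBoxModule q d x)
    (hq : Function.Injective fun n : ℤ ↦ q ^ n) {R L : Module.End K M}
    (hRL : IsSerreLadder q R L (splitComponent q d x 0))
    (hR : ∀ n, ∀ u ∈ splitComponent q d x 0 n, x 0 u = R u + q ^ (d - 2 * n) • u)
    (hL : ∀ n, ∀ u ∈ splitComponent q d x 0 n, x 2 u = L u + q ^ (2 * n - d) • u) (i : ZMod 4) :
    flippedGraph R L (splitComponent q d x 0) d ∈
      Module.End.invtSubmodule ((x i).prodMap (x (i + 2))) := by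
  obtain ⟨h₀, h₂⟩ := hRL.flippedGraph_mem_invtSubmodule
    (fun n hn ↦ h.splitComponent_eq_bot hq (.inr hn)) hR hL
  have hcycle := h.prodMap (h.toIsWeylCycle.comp_add 2)
  match i with
  | 0 => exact h₀
  | 1 => exact hcycle.mem_invtSubmodule_succ hq (i := 0) (k := 2) rfl rfl h₀ h₂
  | 2 => exact h₂
  | 3 => exact hcycle.mem_invtSubmodule_succ hq (i := 2) (k := 0) rfl rfl h₂ h₀

theorem exists_equiv_add_two (h : IsIrreducibleBoxModule q d x)
    (hq : Function.Injective fun n : ℤ ↦ q ^ n) :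
    ∃ σ : M ≃ₗ[K] M, ∀ i v, σ (x i v) = x (i + 2) (σ v) := by
  obtain ⟨R, L, hRL, hR, hL⟩ := (h.isSplitDecomposition hq 0).exists_isSerreLadder
    (ne_zero_of_zpow_injective hq) (fun n hn ↦ h.splitComponent_eq_bot hq (.inl hn))
    (h.qSerre_eq_zero 0) (h.qSerre_eq_zero 2)
  have hinj {u : M} (hu : u ∈ splitComponent q d x 0 0) : (L ^ d) u = 0 → u = 0 :=
    h.eq_zero_of_pow_raise_eq_zero hq hRL.toIsLadder hL le_rfl hu
  have heq {v w : M} := hRL.eq_of_mem_flippedGraph (v := v) (w := w)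
    (fun n hn ↦ h.splitComponent_eq_bot hq (.inr hn)) hq (h.iSupIndep_splitComponent hq 0)
  obtain ⟨u, hu, hu₀⟩ : ∃ u ∈ splitComponent q d x 0 0, u ≠ 0 := by
    rw [h.splitComponent_zero hq]
    exact (Submodule.ne_bot_iff _).mp (h.qEigenspace_zero_ne_bot 0)
  have hLu : (L ^ d) u ∈ splitComponent q d x 0 d := by simpa using hRL.pow_raise d hu
  refine h.isIrreducibleFamily.exists_intertwining_equiv (h.comp_add 2).isIrreducibleFamily
    (h.flippedGraph_mem_invtSubmodule hq hRL hR hL) (fun hbot ↦ hu₀ ?_)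
    (fun htop ↦ hu₀ (hinj hu ?_)) fun htop ↦ hu₀ (hinj hu ?_)
  · have hmem := mem_flippedGraph (R := R) (L := L) (d := d) hu
    rw [hbot] at hmem
    exact congrArg Prod.fst hmem
  · have hmem : u ∈ (flippedGraph R L _ d).comap (LinearMap.inl K M M) :=
      htop ▸ Submodule.mem_top
    exact (heq hu (zero_mem _) hmem).symm
  · have hmem : (L ^ d) u ∈ (flippedGraph R L _ d).comap (LinearMap.inr K M M) :=
      htop ▸ Submodule.mem_top
    rw [heq (zero_mem _) hLu hmem, map_zero]

end IsIrreducibleBoxModule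

end Isomorphism

/-! ### Modules for the presented algebra -/

section Presentation

variable {F} {V : Type} [AddCommGroup V] [Module F V] {q : F} {d : ℕ}
  {π : BoxQ F q →ₐ[F] Module.End F V}

lemma zpow_injective_of_pow_ne_one (hq0 : q ≠ 0) (hq1 : ∀ n : ℕ, 0 < n → q ^ n ≠ 1) :
    Function.Injective fun n : ℤ ↦ q ^ n := by
  refine Function.Injective.of_lt_imp_ne fun a b hab h ↦ hq1 (b - a).toNat (by lia) ?_
  rw [← zpow_natCast, Int.toNat_of_nonneg (by lia), zpow_sub₀ hq0, h,
    div_self (zpow_ne_zero _ hq0)]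

lemma qInt_three_eq (hq : Function.Injective fun n : ℤ ↦ q ^ n) :
    (q ^ 3 - q⁻¹ ^ 3) / (q - q⁻¹) = q ^ 2 + 1 + q⁻¹ ^ 2 := by
  have hq0 := ne_zero_of_zpow_injective hq
  have hne : q - q⁻¹ ≠ 0 := sub_ne_zero.mpr fun h ↦
    absurd (@hq 1 (-1) (by simpa using h)) (by norm_num)
  rw [div_eq_iff hne]
  field_simp
  ring

lemma isWeylPair_bx (π : BoxQ F q →ₐ[F] Module.End F V) (i : ZMod 4) :
    IsWeylPair q (π (bx F q i)) (π (bx F q (i + 1))) := by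
  have h := congrArg π (RingQuot.mkAlgHom_rel F (BoxRel.rel1 (q := q) i))
  simpa only [map_sub, map_smul, map_mul, map_one] using! h

lemma qSerre_bx (hq : Function.Injective fun n : ℤ ↦ q ^ n) (π : BoxQ F q →ₐ[F] Module.End F V)
    (i : ZMod 4) : qSerre q (π (bx F q i)) (π (bx F q (i + 2))) = 0 := by
  have h := congrArg π (RingQuot.mkAlgHom_rel F (BoxRel.rel2 (q := q) i))
  rw [qInt_three_eq hq] at h
  simp only [map_add, map_smul, map_mul, map_pow] at h
  rw [qSerre, sub_add_eq_add_sub, sub_sub, sub_eq_zero]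
  exact h

lemma Type1Diam.isQDiagonalizable (h : Type1Diam F q π d) (i : ZMod 4) :
    IsQDiagonalizable q d (π (bx F q i)) := by
  obtain ⟨hs, he⟩ := h i
  refine top_le_iff.mp (hs.ge.trans (iSup_le fun θ ↦ ?_))
  by_cases hθ : θ ∈ EigSet F (π (bx F q i))
  · obtain ⟨n, hn, rfl⟩ := he ▸ hθ
    exact qEigenspace_le_qEigensum ⟨by lia, by lia⟩
  · rw [not_not.mp hθ]
    exact bot_le

lemma Type1Diam.qEigenspace_zero_ne_bot (h : Type1Diam F q π d) (i : ZMod 4) :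
    qEigenspace q d (π (bx F q i)) 0 ≠ ⊥ := by
  have hmem : q ^ ((d : ℤ) - 2 * 0) ∈ EigSet F (π (bx F q i)) :=
    (h i).2 ▸ ⟨0, Nat.zero_le d, rfl⟩
  exact hmem

lemma IsIrrep.isIrreducibleFamily (h : IsIrrep F π) :
    IsIrreducibleFamily fun i ↦ π (bx F q i) := by
  refine fun W hW ↦ h.2 W fun a ↦ ?_
  obtain ⟨a, rfl⟩ := RingQuot.mkAlgHom_surjective F (BoxRel F q) a
  induction a using FreeAlgebra.induction with
  | grade0 r =>
    intro v hv
    rw [AlgHom.commutes, AlgHom.commutes, Module.algebraMap_end_apply]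
    exact W.smul_mem r hv
  | grade1 i => exact hW i
  | mul a b ha hb =>
    intro v hv
    rw [map_mul, map_mul]
    exact ha _ (hb v hv)
  | add a b ha hb =>
    intro v hv
    rw [map_add, map_add]
    exact W.add_mem (ha v hv) (hb v hv)

end Presentation

theorem stmt17_general (q : F) (hq0 : q ≠ 0) (hq1 : ∀ n : ℕ, 0 < n → q ^ n ≠ 1)
    (V : Type) [AddCommGroup V] [Module F V] [FiniteDimensional F V]
    (π : BoxQ F q →ₐ[F] Module.End F V) (hirr : IsIrrep F π)
    (hty : ∃ d : ℕ, Type1Diam F q π d) :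
    ∃ σ : V ≃ₗ[F] V, ∀ (i : ZMod 4) (v : V),
      σ (π (bx F q i) v) = π (bx F q (i + 2)) (σ v) := by
  obtain ⟨d, hd⟩ := hty
  have hq := zpow_injective_of_pow_ne_one hq0 hq1
  have h : IsIrreducibleBoxModule q d fun i ↦ π (bx F q i) :=
    { isWeylPair := isWeylPair_bx π
      isQDiagonalizable := hd.isQDiagonalizable
      qSerre_eq_zero := qSerre_bx hq π
      qEigenspace_zero_ne_bot := hd.qEigenspace_zero_ne_bot
      isIrreducibleFamily := hirr.isIrreducibleFamily }
  exact h.exists_equiv_add_two hq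

/-- A finite-dimensional irreducible `□_q`-module of type 1 is isomorphic to its twist
by `ρ²`: there is a linear bijection `σ` with `σ ∘ x_i = x_{i+2} ∘ σ` for all `i`. -/
theorem stmt17 [IsAlgClosed F] [CharZero F] (q : F) (hq0 : q ≠ 0)
    (hq1 : ∀ n : ℕ, 0 < n → q ^ n ≠ 1)
    (V : Type) [AddCommGroup V] [Module F V] [FiniteDimensional F V]
    (π : BoxQ F q →ₐ[F] Module.End F V) (hirr : IsIrrep F π)
    (hty : ∃ d : ℕ, Type1Diam F q π d) :
    ∃ σ : V ≃ₗ[F] V, ∀ (i : ZMod 4) (v : V),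
      σ (π (bx F q i) v) = π (bx F q (i + 2)) (σ v) := by
  exact stmt17_general F q hq0 hq1 V π hirr hty
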